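/- arXiv:1508.06199 — 3 statements merged into one kernel-verified Lean document; each statement's English description precedes it below -/
import Mathlib

section
/- There exist a constant C > 0 and a natural number K such that for every λ ∈ ℂ with Im λ > ρ, ∫₀^∞ |b_λ(t)| Δ(t) dt ≤ C (1+|λ|)^K/(Im λ − ρ). -/
open Complex MeasureTheory Set

noncomputable section

/-- Gauss hypergeometric function ₂F₁ as a power series sum. -/
def hyp (a b c x : ℂ) : ℂ :=
  ∑' n : ℕ, (ascPochhammer ℂ n).eval a * (ascPochhammer ℂ n).eval b /
    ((ascPochhammer ℂ n).eval c * (n.factorial : ℂ)) * x ^ n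

/-- ρ = (m₁ + 2 m₂)/2 -/
def rho (m₁ m₂ : ℕ) : ℝ := ((m₁ : ℝ) + 2 * m₂) / 2

/-- Δ(t) = (2 sinh t)^(m₁+m₂) (2 cosh t)^(m₂) -/
def Del (m₁ m₂ : ℕ) (t : ℝ) : ℝ :=
  (2 * Real.sinh t) ^ (m₁ + m₂) * (2 * Real.cosh t) ^ m₂

/-- The solution Φ_λ. -/
def Phi (m₁ m₂ : ℕ) (l : ℂ) (t : ℝ) : ℂ :=
  ((2 * Real.cosh t : ℝ) : ℂ) ^ (Complex.I * l - (rho m₁ m₂ : ℂ)) *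
    hyp (((rho m₁ m₂ : ℂ) - Complex.I * l) / 2) (((m₁ : ℂ) + 2) / 4 - Complex.I * l / 2)
      (1 - Complex.I * l) ((((Real.cosh t) ^ 2 : ℝ) : ℂ))⁻¹

/-- The function b_λ. -/
def bfun (m₁ m₂ : ℕ) (l : ℂ) (t : ℝ) : ℂ :=
  (2 : ℂ) ^ (-(rho m₁ m₂ : ℂ) - 1 - Complex.I * l) *
    (Complex.Gamma (((rho m₁ m₂ : ℂ) - Complex.I * l) / 2) *
      Complex.Gamma (((m₁ : ℂ) + 2) / 4 - Complex.I * l / 2) /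
      (Complex.Gamma (((m₁ : ℂ) + (m₂ : ℂ) + 1) / 2) * Complex.Gamma (1 - Complex.I * l))) *
    Phi m₁ m₂ l t

theorem hasSum_ascPochhammer_mul_pow (b : ℂ) {z : ℂ} (hz : ‖z‖ < 1) :
    HasSum (fun n : ℕ ↦ (ascPochhammer ℂ n).eval b / (n.factorial : ℂ) * z ^ n)
      ((1 - z) ^ (-b)) := by
  have h := (Complex.one_div_one_sub_cpow_hasFPowerSeriesOnBall_zero b).hasSum
    (y := z) (by simpa [enorm_eq_nnnorm, ← NNReal.coe_lt_one] using hz)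
  rw [zero_add, one_div, ← cpow_neg] at h
  refine h.congr_fun ?_
  intro n
  have : (n.factorial : ℂ) ≠ 0 := by exact_mod_cast n.factorial_ne_zero
  have h2 := Ring.factorial_nsmul_multichoose_eq_ascPochhammer b n
  rw [Polynomial.ascPochhammer_smeval_eq_eval, Ring.multichoose_eq, nsmul_eq_mul] at h2
  simp [FormalMultilinearSeries.ofScalars, List.ofFn_const, ← h2, mul_div_cancel_left₀ _ this]

theorem summable_norm_ascPochhammer_mul_pow (b : ℂ) {z : ℂ} (hz : ‖z‖ < 1) :
    Summable (fun n : ℕ ↦ ‖(ascPochhammer ℂ n).eval b / (n.factorial : ℂ)‖ * ‖z‖ ^ n) := by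
  simpa using (hasSum_ascPochhammer_mul_pow b hz).summable.norm

theorem ne_neg_natCast_of_re_pos {z : ℂ} (hz : 0 < z.re) (k : ℕ) : z ≠ -k := by
  rintro rfl
  simp only [neg_re, natCast_re] at hz
  linarith [(Nat.cast_nonneg k : (0 : ℝ) ≤ k)]

theorem Gamma_mul_ascPochhammer_eval {z : ℂ} (hz : 0 < z.re) (n : ℕ) :
    Complex.Gamma z * (ascPochhammer ℂ n).eval z = Complex.Gamma (z + n) := by
  rw [← Gamma_add_nat_div_Gamma_eq z (ne_neg_natCast_of_re_pos hz),
    mul_div_cancel₀ _ (Complex.Gamma_ne_zero_of_re_pos hz)]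

/-- Euler's integral representation of the hypergeometric function. -/
theorem Gamma_mul_Gamma_div_mul_hyp_eq_integral {a v : ℂ} (b : ℂ) {x : ℝ} (ha : 0 < a.re)
    (hv : 0 < v.re) (hx₀ : 0 ≤ x) (hx : x < 1) :
    Complex.Gamma a * Complex.Gamma v / Complex.Gamma (a + v) * hyp a b (a + v) x =
      ∫ u : ℝ in (0 : ℝ)..1,
        (1 - (u * x : ℂ)) ^ (-b) * ((u : ℂ) ^ (a - 1) * (1 - (u : ℂ)) ^ (v - 1)) := by
  have hxn : ‖(x : ℂ)‖ = x := by simpa using hx₀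
  have hbeta := Complex.betaIntegral_convergent ha hv
  have hsum := summable_norm_ascPochhammer_mul_pow b (z := (x : ℂ)) (by rwa [hxn])
  have key := intervalIntegral.hasSum_integral_of_dominated_convergence
    (μ := volume) (a := (0 : ℝ)) (b := 1)
    (F := fun (n : ℕ) (u : ℝ) ↦ (ascPochhammer ℂ n).eval b / (n.factorial : ℂ) *
      (u * x : ℂ) ^ n * ((u : ℂ) ^ (a - 1) * (1 - (u : ℂ)) ^ (v - 1)))
    (f := fun u : ℝ ↦
      (1 - (u * x : ℂ)) ^ (-b) * ((u : ℂ) ^ (a - 1) * (1 - (u : ℂ)) ^ (v - 1)))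
    (fun n u ↦ ‖(ascPochhammer ℂ n).eval b / (n.factorial : ℂ)‖ * ‖(x : ℂ)‖ ^ n *
      ‖(u : ℂ) ^ (a - 1) * (1 - (u : ℂ)) ^ (v - 1)‖) ?_ ?_ ?_ ?_ ?_
  · unfold hyp
    rw [← key.tsum_eq, ← tsum_mul_left]
    refine tsum_congr fun n ↦ ?_
    have han : 0 < (a + n).re := by
      simp only [add_re, natCast_re]; positivity
    have hav : 0 < (a + v).re := by simp only [add_re]; positivity
    have havn : 0 < (a + v + n).re := by simp only [add_re, natCast_re]; positivity
    have h1 : ∫ u : ℝ in (0 : ℝ)..1, (ascPochhammer ℂ n).eval b / (n.factorial : ℂ) *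
        (u * x : ℂ) ^ n * ((u : ℂ) ^ (a - 1) * (1 - (u : ℂ)) ^ (v - 1)) =
        (ascPochhammer ℂ n).eval b / (n.factorial : ℂ) * x ^ n * Complex.betaIntegral (a + n) v := by
      rw [Complex.betaIntegral, ← intervalIntegral.integral_const_mul]
      refine intervalIntegral.integral_congr_ae (.of_forall fun u hu ↦ ?_)
      rw [uIoc_of_le zero_le_one] at hu
      have hu0 : (u : ℂ) ≠ 0 := by exact_mod_cast hu.1.ne'
      rw [show a + n - 1 = (a - 1) + n by ring, cpow_add _ _ hu0, cpow_natCast]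
      ring
    have h2 := Complex.Gamma_mul_Gamma_eq_betaIntegral han hv
    have h3 := Gamma_mul_ascPochhammer_eval ha n
    have h4 := Gamma_mul_ascPochhammer_eval hav n
    have h5 := Complex.Gamma_ne_zero_of_re_pos hav
    have h6 := Complex.Gamma_ne_zero_of_re_pos havn
    have h7 : (ascPochhammer ℂ n).eval (a + v) ≠ 0 := by
      intro h; rw [h, mul_zero] at h4; exact h6 h4.symm
    have h8 : (n.factorial : ℂ) ≠ 0 := by exact_mod_cast n.factorial_ne_zero
    rw [show a + n + v = a + v + n by ring, ← h3, ← h4] at h2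
    rw [h1]
    field_simp
    linear_combination (ascPochhammer ℂ n).eval b * x ^ n * h2
  · intro n
    rw [uIoc_of_le zero_le_one]
    refine AEStronglyMeasurable.mul (by fun_prop) ?_
    exact ((intervalIntegrable_iff_integrableOn_Ioc_of_le zero_le_one).1 hbeta).aestronglyMeasurable
  · intro n
    refine .of_forall fun u hu ↦ ?_
    rw [uIoc_of_le zero_le_one] at hu
    have hun : ‖(u : ℂ)‖ ≤ 1 := by
      rw [Complex.norm_real, Real.norm_eq_abs, abs_of_pos hu.1]; exact hu.2
    rw [norm_mul, norm_mul, norm_pow, norm_mul]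
    gcongr
    exact mul_le_of_le_one_left (norm_nonneg _) hun
  · exact .of_forall fun u _ ↦ hsum.mul_right _
  · simp_rw [tsum_mul_right]
    exact hbeta.norm.const_mul _
  · refine .of_forall fun u hu ↦ ?_
    rw [uIoc_of_le zero_le_one] at hu
    refine (hasSum_ascPochhammer_mul_pow b ?_).mul_right _
    rw [norm_mul, hxn, Complex.norm_real, Real.norm_eq_abs, abs_of_pos hu.1]
    exact (mul_le_of_le_one_left hx₀ hu.2).trans_lt hx

theorem norm_one_sub_cpow {u : ℝ} (hu : u < 1) (s : ℂ) : ‖(1 - (u : ℂ)) ^ s‖ = (1 - u) ^ s.re := by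
  rw [← ofReal_one, ← ofReal_sub, norm_cpow_eq_rpow_re_of_pos (by linarith)]

theorem intervalIntegrable_rpow_mul_one_sub_rpow {p q : ℝ} (hp : 0 < p) (hq : 0 < q) :
    IntervalIntegrable (fun u : ℝ ↦ u ^ (p - 1) * (1 - u) ^ (q - 1)) volume 0 1 := by
  have h := (Complex.betaIntegral_convergent (u := p) (v := q) (by simpa) (by simpa)).norm
  rw [intervalIntegrable_iff_integrableOn_Ioo_of_le zero_le_one] at h ⊢
  refine h.congr_fun (fun u hu ↦ ?_) measurableSet_Ioo
  simp only
  rw [norm_mul, norm_cpow_eq_rpow_re_of_pos hu.1, norm_one_sub_cpow hu.2]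
  simp

theorem norm_intervalIntegral_le_of_norm_le_Ioo {f : ℝ → ℂ} {g : ℝ → ℝ}
    (h : ∀ u ∈ Ioo (0 : ℝ) 1, ‖f u‖ ≤ g u) (hg : IntervalIntegrable g volume 0 1) :
    ‖∫ u in (0 : ℝ)..1, f u‖ ≤ ∫ u in (0 : ℝ)..1, g u := by
  refine intervalIntegral.norm_integral_le_of_norm_le zero_le_one ?_ hg
  filter_upwards [compl_mem_ae_iff.2 (measure_singleton (1 : ℝ))] with u hu1 hu
  exact h u ⟨hu.1, lt_of_le_of_ne hu.2 hu1⟩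

theorem norm_Gamma_mul_Gamma_div_mul_hyp_le {r d : ℝ} (hr : 0 < r) (hd : 0 ≤ d) {a b v : ℂ} {x : ℝ}
    (ha : r ≤ a.re) (hv : 1 ≤ v.re) (hb : b.re = v.re + d) (hx₀ : 0 ≤ x) (hx : x < 1) :
    ‖Complex.Gamma a * Complex.Gamma v / Complex.Gamma (a + v) * hyp a b (a + v) x‖ ≤
      (∫ u in (0 : ℝ)..1, u ^ (r - 1) * (1 - u) ^ ((1 / 4 : ℝ) - 1)) *
        (1 - x) ^ (-(d + 1 / 4)) := by
  rw [Gamma_mul_Gamma_div_mul_hyp_eq_integral b (hr.trans_le ha) (one_pos.trans_le hv) hx₀ hx,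
    ← intervalIntegral.integral_mul_const]
  refine norm_intervalIntegral_le_of_norm_le_Ioo (fun u hu ↦ ?_)
    ((intervalIntegrable_rpow_mul_one_sub_rpow hr (by norm_num)).mul_const _)
  have hu₀ := hu.1
  have hu₁ : 0 < 1 - u := sub_pos.2 hu.2
  have hx₁ : 0 < 1 - x := sub_pos.2 hx
  have hxu : u * x ≤ x := mul_le_of_le_one_left hx₀ hu.2.le
  have hxu' : u * x ≤ u := mul_le_of_le_one_right hu₀.le hx.le
  have hux : 0 < 1 - u * x := by linarith
  have e1 : (1 - u * x) ^ (-b.re) = (1 - u * x) ^ (-(v.re - 1)) *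
      ((1 - u * x) ^ (-(3 / 4 : ℝ)) * (1 - u * x) ^ (-(d + 1 / 4))) := by
    rw [← Real.rpow_add hux, ← Real.rpow_add hux, hb]; congr 1; ring
  have e2 : (1 - u * x) ^ (-(v.re - 1)) ≤ (1 - u) ^ (-(v.re - 1)) :=
    Real.rpow_le_rpow_of_nonpos hu₁ (by linarith) (by linarith)
  have e3 : (1 - u * x) ^ (-(3 / 4 : ℝ)) ≤ (1 - u) ^ (-(3 / 4 : ℝ)) :=
    Real.rpow_le_rpow_of_nonpos hu₁ (by linarith) (by linarith)
  have e4 : (1 - u * x) ^ (-(d + 1 / 4)) ≤ (1 - x) ^ (-(d + 1 / 4)) :=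
    Real.rpow_le_rpow_of_nonpos hx₁ (by linarith) (by linarith)
  have e5 : u ^ (a.re - 1) ≤ u ^ (r - 1) :=
    Real.rpow_le_rpow_of_exponent_ge hu₀ hu.2.le (by linarith)
  rw [norm_mul, norm_mul, ← ofReal_mul, norm_one_sub_cpow (by linarith),
    norm_cpow_eq_rpow_re_of_pos hu₀, norm_one_sub_cpow hu.2]
  simp only [neg_re, sub_re, one_re]
  calc _ ≤ ((1 - u) ^ (-(v.re - 1)) * ((1 - u) ^ (-(3 / 4 : ℝ)) * (1 - x) ^ (-(d + 1 / 4)))) *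
        (u ^ (r - 1) * (1 - u) ^ (v.re - 1)) := by rw [e1]; gcongr
    _ = _ := by
      rw [Real.rpow_neg hu₁.le (v.re - 1), show (1 / 4 : ℝ) - 1 = -(3 / 4) by norm_num]
      have := (Real.rpow_pos_of_pos hu₁ (v.re - 1)).ne'
      field_simp

theorem norm_Gamma_add_half_le {z : ℂ} (hz : 1 ≤ z.re) :
    ‖Complex.Gamma (z + 1 / 2)‖ ≤ 2 * ‖z‖ * ‖Complex.Gamma z‖ := by
  have hz0 : z ≠ 0 := by rintro rfl; norm_num at hz
  have hB : ‖Complex.betaIntegral (z + 1 / 2) (1 / 2)‖ ≤ 2 := by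
    have h1 : ‖Complex.betaIntegral (z + 1 / 2) (1 / 2)‖ ≤
        ∫ u in (0 : ℝ)..1, u ^ ((1 : ℝ) - 1) * (1 - u) ^ ((1 / 2 : ℝ) - 1) := by
      refine norm_intervalIntegral_le_of_norm_le_Ioo (fun u hu ↦ ?_)
        (intervalIntegrable_rpow_mul_one_sub_rpow one_pos (by norm_num))
      rw [norm_mul, norm_cpow_eq_rpow_re_of_pos hu.1, norm_one_sub_cpow hu.2]
      have e2 : ((1 / 2 : ℂ) - 1).re = 1 / 2 - 1 := by norm_num
      have h0 : 0 ≤ 1 - u := by linarith [hu.2]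
      rw [e2]
      gcongr ?_ * _
      refine Real.rpow_le_rpow_of_exponent_ge hu.1 hu.2.le ?_
      norm_num
      linarith
    have h2 : ∫ u in (0 : ℝ)..1, u ^ ((1 : ℝ) - 1) * (1 - u) ^ ((1 / 2 : ℝ) - 1) = 2 := by
      simp only [sub_self, Real.rpow_zero, one_mul]
      rw [intervalIntegral.integral_comp_sub_left (fun u : ℝ ↦ u ^ ((1 / 2 : ℝ) - 1)) 1,
        integral_rpow (by norm_num)]
      norm_num
    exact h1.trans_eq h2
  have hG := Complex.Gamma_mul_Gamma_eq_betaIntegral (s := z + 1 / 2) (t := 1 / 2)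
    (by norm_num; linarith) (by norm_num)
  rw [show z + 1 / 2 + 1 / 2 = z + 1 by ring, Complex.Gamma_add_one z hz0] at hG
  have hhalf : 1 ≤ ‖Complex.Gamma (1 / 2)‖ := by
    rw [Complex.Gamma_one_half_eq, norm_cpow_eq_rpow_re_of_pos Real.pi_pos]
    refine Real.one_le_rpow (by linarith [Real.pi_gt_three]) (by norm_num)
  calc ‖Complex.Gamma (z + 1 / 2)‖
      ≤ ‖Complex.Gamma (z + 1 / 2)‖ * ‖Complex.Gamma (1 / 2)‖ :=
        le_mul_of_one_le_right (norm_nonneg _) hhalf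
    _ = ‖z‖ * ‖Complex.Gamma z‖ * ‖Complex.betaIntegral (z + 1 / 2) (1 / 2)‖ := by
        rw [← norm_mul, hG, norm_mul, norm_mul]
    _ ≤ ‖z‖ * ‖Complex.Gamma z‖ * 2 := by gcongr
    _ = _ := by ring

theorem exists_norm_Gamma_add_half_mul_le (k : ℕ) : ∃ C : ℝ, 0 < C ∧ ∀ z : ℂ, 1 ≤ z.re →
    ‖Complex.Gamma (z + k / 2)‖ ≤ C * (1 + ‖z‖) ^ k * ‖Complex.Gamma z‖ := by
  induction k with
  | zero => exact ⟨1, one_pos, fun z _ ↦ by simp⟩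
  | succ k ih =>
    obtain ⟨C, hC, h⟩ := ih
    refine ⟨2 * (1 + k) * C, by positivity, fun z hz ↦ ?_⟩
    have h1 : 1 ≤ (z + k / 2).re := by
      have : (z + k / 2).re = z.re + k / 2 := by
        rw [add_re, show (k / 2 : ℂ) = ((k / 2 : ℝ) : ℂ) by push_cast; rfl, ofReal_re]
      rw [this]
      have : (0 : ℝ) ≤ k / 2 := by positivity
      linarith
    have h2 := norm_Gamma_add_half_le h1
    have h3 : ‖z + k / 2‖ ≤ (1 + k) * (1 + ‖z‖) := by
      refine (norm_add_le _ _).trans ?_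
      rw [norm_div, Complex.norm_natCast, Complex.norm_ofNat]
      have : (0 : ℝ) ≤ k := by positivity
      nlinarith [norm_nonneg z, mul_nonneg this (norm_nonneg z)]
    calc ‖Complex.Gamma (z + (k + 1 : ℕ) / 2)‖ = ‖Complex.Gamma (z + k / 2 + 1 / 2)‖ := by
          push_cast; congr 2; ring
      _ ≤ 2 * ((1 + k) * (1 + ‖z‖)) * (C * (1 + ‖z‖) ^ k * ‖Complex.Gamma z‖) := by
          refine h2.trans ?_
          gcongr
          exact h z hz
      _ = _ := by ring

theorem lintegral_cosh_rpow_neg_le {δ : ℝ} (hδ : 0 < δ) :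
    (∫⁻ t in Ioi (0 : ℝ), ENNReal.ofReal (Real.cosh t ^ (-δ))) ≤
      ENNReal.ofReal (2 * (1 + δ) / δ) := by
  set m := min δ 1 with hm
  have hm0 : 0 < m := lt_min hδ one_pos
  have hbound (t : ℝ) : Real.cosh t ^ (-δ) ≤ 2 * Real.exp (-m * t) := by
    have h1 : Real.exp t / 2 ≤ Real.cosh t := by
      rw [Real.cosh_eq]; linarith [Real.exp_pos (-t)]
    calc Real.cosh t ^ (-δ) ≤ Real.cosh t ^ (-m) :=
          Real.rpow_le_rpow_of_exponent_le (Real.one_le_cosh t) (neg_le_neg (min_le_left _ _))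
      _ ≤ (Real.exp t / 2) ^ (-m) :=
          Real.rpow_le_rpow_of_nonpos (by positivity) h1 (by linarith)
      _ = 2 ^ m * Real.exp (-m * t) := by
          rw [Real.div_rpow (Real.exp_pos _).le zero_le_two, Real.rpow_neg zero_le_two,
            ← Real.exp_mul]
          field_simp
      _ ≤ _ := by
          gcongr
          calc (2 : ℝ) ^ m ≤ 2 ^ (1 : ℝ) :=
                Real.rpow_le_rpow_of_exponent_le one_le_two (min_le_right _ _)
            _ = 2 := Real.rpow_one 2
  calc _ ≤ ∫⁻ t in Ioi (0 : ℝ), ENNReal.ofReal (2 * Real.exp (-m * t)) :=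
        lintegral_mono fun t ↦ ENNReal.ofReal_le_ofReal (hbound t)
    _ = ENNReal.ofReal (2 / m) := by
        rw [← ofReal_integral_eq_lintegral_ofReal
          ((integrableOn_exp_mul_Ioi (by linarith) 0).const_mul 2)
          (.of_forall fun t ↦ by positivity), integral_const_mul,
          integral_exp_mul_Ioi (by linarith)]
        congr 1
        simp
        field_simp
    _ ≤ _ := by
        refine ENNReal.ofReal_le_ofReal ?_
        rw [div_le_div_iff₀ hm0 hδ]
        rcases min_cases δ 1 with ⟨h, _⟩ | ⟨h, _⟩ <;> rw [hm, h] <;> nlinarith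

theorem Del_mul_rpow_le {m₁ m₂ k : ℕ} (hk : m₁ + m₂ = k + 1) (s : ℝ) {t : ℝ} (ht : 0 < t) :
    (2 * Real.cosh t) ^ (-s - rho m₁ m₂) * (1 - (Real.cosh t ^ 2)⁻¹) ^ (-((k : ℝ) / 2 + 1 / 4)) *
      Del m₁ m₂ t ≤ (2 * Real.cosh t) ^ (-(s - rho m₁ m₂)) := by
  have hc : 0 < Real.cosh t := Real.cosh_pos t
  have hs : 0 < Real.sinh t := Real.sinh_pos_iff.2 ht
  set T := Real.sinh t / Real.cosh t with hT
  have hT0 : 0 < T := div_pos hs hc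
  have hT1 : T ≤ 1 := (div_le_one hc).2 (Real.sinh_lt_cosh t).le
  have h1 : 1 - (Real.cosh t ^ 2)⁻¹ = T ^ (2 : ℝ) := by
    rw [Real.rpow_two, hT, div_pow, Real.sinh_sq]
    field_simp
  have h2 : Del m₁ m₂ t = T ^ ((k : ℝ) + 1) * (2 * Real.cosh t) ^ (2 * rho m₁ m₂) := by
    have e : (2 * rho m₁ m₂ : ℝ) = ((k + 1 + m₂ : ℕ) : ℝ) := by
      rw [← hk]; unfold rho; push_cast; ring
    rw [e, Real.rpow_natCast, ← Nat.cast_add_one, Real.rpow_natCast, Del, hk, hT,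
      pow_add _ (k + 1), ← mul_assoc, ← mul_pow]
    congr 2
    field_simp
  have h3 : (T ^ (2 : ℝ)) ^ (-((k : ℝ) / 2 + 1 / 4)) * T ^ ((k : ℝ) + 1) ≤ 1 := by
    rw [← Real.rpow_mul hT0.le, ← Real.rpow_add hT0]
    exact Real.rpow_le_one hT0.le hT1 (by linarith)
  have h4 : (2 * Real.cosh t) ^ (-(s - rho m₁ m₂)) =
      (2 * Real.cosh t) ^ (-s - rho m₁ m₂) * (2 * Real.cosh t) ^ (2 * rho m₁ m₂) := by
    rw [← Real.rpow_add (by positivity)]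
    congr 1
    ring
  rw [h1, h2, h4]
  calc _ = (2 * Real.cosh t) ^ (-s - rho m₁ m₂) * (2 * Real.cosh t) ^ (2 * rho m₁ m₂) *
        ((T ^ (2 : ℝ)) ^ (-((k : ℝ) / 2 + 1 / 4)) * T ^ ((k : ℝ) + 1)) := by ring
    _ ≤ _ := mul_le_of_le_one_right (by positivity) h3

theorem exists_norm_bfun_mul_Del_le (m₁ m₂ : ℕ) (hm₁ : 1 ≤ m₁) :
    ∃ (C : ℝ) (k : ℕ), 0 < C ∧ ∀ l : ℂ, rho m₁ m₂ < l.im → ∀ t : ℝ, 0 < t →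
      ‖bfun m₁ m₂ l t‖ * Del m₁ m₂ t ≤
        C * (1 + ‖l‖) ^ k * Real.cosh t ^ (-(l.im - rho m₁ m₂)) := by
  obtain ⟨k, hk⟩ : ∃ k, m₁ + m₂ = k + 1 := ⟨m₁ + m₂ - 1, by lia⟩
  obtain ⟨C, hC, hGamma⟩ := exists_norm_Gamma_add_half_mul_le k
  set r := rho m₁ m₂ with hr
  have hr0 : 0 < r := by
    have : (1 : ℝ) ≤ m₁ := by exact_mod_cast hm₁
    rw [hr, rho]; positivity
  set J := ∫ u in (0 : ℝ)..1, u ^ (r - 1) * (1 - u) ^ ((1 / 4 : ℝ) - 1) with hJ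
  have hJ0 : 0 ≤ J := intervalIntegral.integral_nonneg zero_le_one fun u hu ↦
    mul_nonneg (Real.rpow_nonneg hu.1 _) (Real.rpow_nonneg (sub_nonneg.2 hu.2) _)
  set G := ‖Complex.Gamma (((m₁ : ℂ) + (m₂ : ℂ) + 1) / 2)‖ with hG
  refine ⟨C * (2 + r) ^ k * J / G + 1, k, by positivity, fun l hl t ht ↦ ?_⟩
  set a : ℂ := ((r : ℂ) - Complex.I * l) / 2 with ha
  set v : ℂ := 1 - (r : ℂ) / 2 - Complex.I * l / 2 with hv
  have hrC : (r : ℂ) = ((m₁ : ℂ) + 2 * m₂) / 2 := by rw [hr, rho]; push_cast; rfl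
  have hkC : (m₁ : ℂ) + m₂ = k + 1 := by exact_mod_cast hk
  have hb : ((m₁ : ℂ) + 2) / 4 - Complex.I * l / 2 = v + k / 2 := by
    rw [hv, hrC]; linear_combination (1 / 2) * hkC
  have hc : 1 - Complex.I * l = a + v := by rw [ha, hv]; ring
  have hare : a.re = (r + l.im) / 2 := by simp [ha]
  have hvre : v.re = 1 + (l.im - r) / 2 := by simp [hv]; ring
  have hv1 : 1 ≤ v.re := by rw [hvre]; linarith
  have hch : 1 < Real.cosh t := Real.one_lt_cosh.2 ht.ne'
  set x := (Real.cosh t ^ 2)⁻¹ with hx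
  have hx0 : 0 ≤ x := by positivity
  have hx1 : x < 1 := inv_lt_one_of_one_lt₀ (one_lt_pow₀ hch two_ne_zero)
  have hF := norm_Gamma_mul_Gamma_div_mul_hyp_le (r := r) (d := k / 2) (a := a) (b := v + k / 2)
    hr0 (by positivity) (by rw [hare]; linarith) hv1 (by
      rw [add_re, show (k / 2 : ℂ) = ((k / 2 : ℝ) : ℂ) by push_cast; rfl, ofReal_re]) hx0 hx1
  rw [← hJ] at hF
  have hvG : 0 < ‖Complex.Gamma v‖ :=
    norm_pos_iff.2 (Complex.Gamma_ne_zero_of_re_pos (one_pos.trans_le hv1))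
  have hratio : ‖Complex.Gamma (v + k / 2)‖ / ‖Complex.Gamma v‖ ≤ C * ((2 + r) * (1 + ‖l‖)) ^ k := by
    rw [div_le_iff₀ hvG]
    refine (hGamma v hv1).trans ?_
    gcongr
    have : ‖v‖ ≤ 1 + r / 2 + ‖l‖ / 2 := by
      have h1 : ‖v‖ ≤ ‖(1 : ℂ) - (r : ℂ) / 2‖ + ‖Complex.I * l / 2‖ := norm_sub_le _ _
      have h2 : ‖(1 : ℂ) - (r : ℂ) / 2‖ ≤ ‖(1 : ℂ)‖ + ‖(r : ℂ) / 2‖ := norm_sub_le _ _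
      simp only [norm_div, norm_mul, norm_I, one_mul, norm_one, Complex.norm_ofNat,
        Complex.norm_real, Real.norm_of_nonneg hr0.le] at h1 h2
      linarith
    nlinarith [norm_nonneg l, mul_nonneg hr0.le (norm_nonneg l)]
  have hD0 : 0 ≤ Del m₁ m₂ t := by
    have := Real.sinh_pos_iff.2 ht
    unfold Del; positivity
  have hbf : ‖bfun m₁ m₂ l t‖ = 2 ^ (-r - 1 + l.im) / G *
      (‖Complex.Gamma (v + k / 2)‖ / ‖Complex.Gamma v‖) * (2 * Real.cosh t) ^ (-l.im - r) *
      ‖Complex.Gamma a * Complex.Gamma v / Complex.Gamma (a + v) * hyp a (v + k / 2) (a + v) x‖ := by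
    unfold bfun Phi
    rw [← hr, ← ha, hb, hc, ← ofReal_inv, ← hx]
    have n1 : ‖(2 : ℂ) ^ (-(r : ℂ) - 1 - Complex.I * l)‖ = 2 ^ (-r - 1 + l.im) := by
      rw [← ofReal_ofNat, norm_cpow_eq_rpow_re_of_pos two_pos]
      simp
    have n2 : ‖((2 * Real.cosh t : ℝ) : ℂ) ^ (Complex.I * l - (r : ℂ))‖ =
        (2 * Real.cosh t) ^ (-l.im - r) := by
      rw [norm_cpow_eq_rpow_re_of_pos (by positivity)]
      simp
    simp only [norm_mul, norm_div, n1, n2, ← hG]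
    field_simp
  have h2 : (2 : ℝ) ^ (-r - 1 + l.im) * (2 * Real.cosh t) ^ (-(l.im - r)) ≤
      Real.cosh t ^ (-(l.im - r)) := by
    rw [Real.mul_rpow zero_le_two (by positivity), ← mul_assoc, ← Real.rpow_add two_pos]
    refine mul_le_of_le_one_left (by positivity) (Real.rpow_le_one_of_one_le_of_nonpos one_le_two ?_)
    linarith
  have hmain := Del_mul_rpow_le hk l.im ht
  rw [← hr, ← hx] at hmain
  calc ‖bfun m₁ m₂ l t‖ * Del m₁ m₂ t
      ≤ 2 ^ (-r - 1 + l.im) / G * (C * ((2 + r) * (1 + ‖l‖)) ^ k) *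
        (2 * Real.cosh t) ^ (-l.im - r) * (J * (1 - x) ^ (-((k : ℝ) / 2 + 1 / 4))) *
        Del m₁ m₂ t := by
        rw [hbf]
        gcongr
    _ = 2 ^ (-r - 1 + l.im) / G * (C * ((2 + r) * (1 + ‖l‖)) ^ k) * J *
        ((2 * Real.cosh t) ^ (-l.im - r) * (1 - x) ^ (-((k : ℝ) / 2 + 1 / 4)) *
        Del m₁ m₂ t) := by ring
    _ ≤ 2 ^ (-r - 1 + l.im) / G * (C * ((2 + r) * (1 + ‖l‖)) ^ k) * J *
        (2 * Real.cosh t) ^ (-(l.im - r)) := by gcongr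
    _ = C * (2 + r) ^ k * J / G * (1 + ‖l‖) ^ k *
        (2 ^ (-r - 1 + l.im) * (2 * Real.cosh t) ^ (-(l.im - r))) := by
        rw [mul_pow]; ring
    _ ≤ (C * (2 + r) ^ k * J / G + 1) * (1 + ‖l‖) ^ k * Real.cosh t ^ (-(l.im - r)) := by
        gcongr
        linarith

theorem stmt6 (m₁ m₂ : ℕ) (hm₁ : 1 ≤ m₁) :
    ∃ (C : ℝ) (K : ℕ), 0 < C ∧
      ∀ l : ℂ, rho m₁ m₂ < l.im →
        (∫⁻ t in Set.Ioi (0 : ℝ), ENNReal.ofReal (‖bfun m₁ m₂ l t‖ * Del m₁ m₂ t)) ≤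
          ENNReal.ofReal (C * (1 + ‖l‖) ^ K / (l.im - rho m₁ m₂)) := by
  obtain ⟨C, k, hC, h⟩ := exists_norm_bfun_mul_Del_le m₁ m₂ hm₁
  refine ⟨2 * C, k + 1, by positivity, fun l hl ↦ ?_⟩
  have hδ : 0 < l.im - rho m₁ m₂ := sub_pos.2 hl
  have hle : l.im - rho m₁ m₂ ≤ ‖l‖ := by
    have : 0 ≤ rho m₁ m₂ := by unfold rho; positivity
    linarith [(le_abs_self _).trans (abs_im_le_norm l)]
  have hA : 0 ≤ C * (1 + ‖l‖) ^ k := by positivity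
  calc _ ≤ ∫⁻ t in Ioi (0 : ℝ), ENNReal.ofReal (C * (1 + ‖l‖) ^ k) *
          ENNReal.ofReal (Real.cosh t ^ (-(l.im - rho m₁ m₂))) := by
        refine setLIntegral_mono' measurableSet_Ioi fun t ht ↦ ?_
        rw [← ENNReal.ofReal_mul hA]
        exact ENNReal.ofReal_le_ofReal (h l hl t ht)
    _ = ENNReal.ofReal (C * (1 + ‖l‖) ^ k) *
          ∫⁻ t in Ioi (0 : ℝ), ENNReal.ofReal (Real.cosh t ^ (-(l.im - rho m₁ m₂))) :=
        lintegral_const_mul' _ _ ENNReal.ofReal_ne_top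
    _ ≤ ENNReal.ofReal (C * (1 + ‖l‖) ^ k) *
          ENNReal.ofReal (2 * (1 + (l.im - rho m₁ m₂)) / (l.im - rho m₁ m₂)) := by
        gcongr
        exact lintegral_cosh_rpow_neg_le hδ
    _ ≤ _ := by
        rw [← ENNReal.ofReal_mul hA]
        refine ENNReal.ofReal_le_ofReal ?_
        rw [← mul_div_assoc]
        gcongr ?_ / _
        calc _ ≤ C * (1 + ‖l‖) ^ k * (2 * (1 + ‖l‖)) := by gcongr
          _ = _ := by ring

end
end

section
/- For every η > 0 and every t > 0 the value b_{iη}(t) is a positive real number, and for every η > ρ one has ∫₀^∞ b_{iη}(t) Δ(t) dt = 1/(η² − ρ²); in particular the L¹-norm ∫₀^∞ |b_{iη}(t)| Δ(t) dt tends to 0 as η → ∞. -/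
open Complex MeasureTheory Set

noncomputable section

lemma Gamma_add_natCast_eq_prod {x : ℝ} (hx : 0 < x) (n : ℕ) :
    Real.Gamma (x + n) = Real.Gamma x * ∏ j ∈ Finset.range n, (x + j) := by
  induction n with
  | zero => simp
  | succ n ih =>
    rw [Finset.prod_range_succ, ← mul_assoc, ← ih, Nat.cast_succ, ← add_assoc,
      Real.Gamma_add_one (by positivity), mul_comm]

lemma ascPochhammer_eval_eq_prod (x : ℝ) (n : ℕ) :
    (ascPochhammer ℝ n).eval x = ∏ j ∈ Finset.range n, (x + j) := by
  induction n with
  | zero => simp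
  | succ n ih => rw [ascPochhammer_succ_eval, ih, Finset.prod_range_succ]

lemma Gamma_mul_ascPochhammer {x : ℝ} (hx : 0 < x) (n : ℕ) :
    Real.Gamma x * (ascPochhammer ℝ n).eval x = Real.Gamma (x + n) := by
  rw [Gamma_add_natCast_eq_prod hx, ascPochhammer_eval_eq_prod]

lemma ascPochhammer_eval_ofReal (x : ℝ) (n : ℕ) :
    (ascPochhammer ℂ n).eval (x : ℂ) = ((ascPochhammer ℝ n).eval x : ℝ) := by
  induction n with
  | zero => simp
  | succ n ih => rw [ascPochhammer_succ_eval, ih, ascPochhammer_succ_eval]; push_cast; rfl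

lemma sum_Gamma_ratio_eq {a d : ℝ} (ha : 0 < a) (hd : 0 < d) (N : ℕ) :
    ∑ n ∈ Finset.range (N + 1), Real.Gamma (a + n) * Real.Gamma (d + n) /
        (Real.Gamma (1 + (a + d) + n) * n.factorial) =
      1 / (a * d) * (Real.Gamma (a + (N + 1 : ℕ)) * Real.Gamma (d + (N + 1 : ℕ)) /
        (Real.Gamma (a + d + (N + 1 : ℕ)) * N.factorial)) := by
  induction N with
  | zero =>
    simp [Real.Gamma_add_one ha.ne', Real.Gamma_add_one hd.ne', add_comm (1 : ℝ)]
    have := (Real.Gamma_pos_of_pos (by positivity : 0 < a + d + 1)).ne'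
    field_simp
  | succ N ih =>
    rw [Finset.sum_range_succ, ih]
    have e : ∀ x : ℝ, 0 < x → Real.Gamma (x + (N + 1 + 1 : ℕ)) =
        (x + N + 1) * Real.Gamma (x + (N + 1 : ℕ)) := fun x hx => by
      rw [Nat.cast_succ (N + 1), ← add_assoc, Real.Gamma_add_one (by positivity)]
      push_cast; ring
    have e2 : 1 + (a + d) + ((N + 1 : ℕ) : ℝ) = a + d + ((N + 1 + 1 : ℕ) : ℝ) := by
      push_cast; ring
    rw [e2, e a ha, e d hd, e (a + d) (by positivity), Nat.factorial_succ]
    have := (Real.Gamma_pos_of_pos (by positivity : 0 < a + d + (N + 1 : ℕ))).ne'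
    have h2 : (N.factorial : ℝ) ≠ 0 := by positivity
    have h3 : a + d + N + 1 ≠ 0 := by positivity
    generalize Real.Gamma (a + d + (N + 1 : ℕ)) = G at *
    push_cast
    field_simp
    ring

lemma tendsto_Gamma_ratio {a d : ℝ} (ha : 0 < a) (hd : 0 < d) :
    Filter.Tendsto (fun N : ℕ => Real.Gamma (a + (N + 1 : ℕ)) * Real.Gamma (d + (N + 1 : ℕ)) /
        (Real.Gamma (a + d + (N + 1 : ℕ)) * N.factorial)) Filter.atTop (nhds 1) := by
  have had : 0 < a + d := by positivity
  have h := (((Real.GammaSeq_tendsto_Gamma (a + d)).div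
    ((Real.GammaSeq_tendsto_Gamma a).mul (Real.GammaSeq_tendsto_Gamma d))
    (mul_pos (Real.Gamma_pos_of_pos ha) (Real.Gamma_pos_of_pos hd)).ne').const_mul
    (Real.Gamma a * Real.Gamma d / Real.Gamma (a + d)))
  have ga := (Real.Gamma_pos_of_pos ha).ne'
  have gd := (Real.Gamma_pos_of_pos hd).ne'
  have gad := (Real.Gamma_pos_of_pos had).ne'
  have h1 : Real.Gamma a * Real.Gamma d / Real.Gamma (a + d) *
      (Real.Gamma (a + d) / (Real.Gamma a * Real.Gamma d)) = 1 := by field_simp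
  rw [h1] at h
  refine h.congr' ?_
  filter_upwards [Filter.eventually_gt_atTop 0] with N hN
  have hN' : (0 : ℝ) < N := by exact_mod_cast hN
  have p : ∀ x : ℝ, 0 < x → ∏ j ∈ Finset.range (N + 1), (x + j) ≠ 0 := fun x hx =>
    (Finset.prod_pos fun j _ => by positivity).ne'
  simp only [Pi.div_apply]
  rw [Gamma_add_natCast_eq_prod ha, Gamma_add_natCast_eq_prod hd, Gamma_add_natCast_eq_prod had,
    Real.GammaSeq, Real.GammaSeq, Real.GammaSeq, Real.rpow_add hN']
  have := p a ha
  have := p d hd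
  have := p _ had
  have := (Real.rpow_pos_of_pos hN' a).ne'
  have := (Real.rpow_pos_of_pos hN' d).ne'
  have h2 : (N.factorial : ℝ) ≠ 0 := by positivity
  field_simp

lemma hasSum_Gamma_ratio {a d : ℝ} (ha : 0 < a) (hd : 0 < d) :
    HasSum (fun n : ℕ => Real.Gamma (a + n) * Real.Gamma (d + n) /
        (Real.Gamma (1 + (a + d) + n) * n.factorial)) (1 / (a * d)) := by
  have g : ∀ x : ℝ, 0 < x → ∀ n : ℕ, 0 < Real.Gamma (x + n) := fun x hx n =>
    Real.Gamma_pos_of_pos (by positivity)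
  rw [hasSum_iff_tendsto_nat_of_nonneg
    (fun n => div_nonneg (mul_pos (g a ha n) (g d hd n)).le
      (mul_pos (g _ (by positivity) n) (by positivity)).le), ← Filter.tendsto_add_atTop_iff_nat 1]
  simp only [sum_Gamma_ratio_eq ha hd]
  simpa using (tendsto_Gamma_ratio ha hd).const_mul (1 / (a * d))

lemma image_inv_cosh_sq : (fun t : ℝ => (Real.cosh t ^ 2)⁻¹) '' Ioi 0 = Ioo 0 1 := by
  ext x
  constructor
  · rintro ⟨t, ht, rfl⟩
    have := Real.one_lt_cosh.mpr (ne_of_gt ht)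
    exact ⟨by positivity, inv_lt_one_of_one_lt₀ (one_lt_pow₀ this two_ne_zero)⟩
  · rintro ⟨h0, h1⟩
    have h : 1 < √(x⁻¹) := by
      rw [Real.lt_sqrt zero_le_one]; simpa using (one_lt_inv₀ h0).mpr h1
    refine ⟨Real.arcosh √(x⁻¹), Real.arcosh_pos h, ?_⟩
    simp only
    rw [Real.cosh_arcosh h.le, Real.sq_sqrt (by positivity), inv_inv]

lemma injOn_inv_cosh_sq : InjOn (fun t : ℝ => (Real.cosh t ^ 2)⁻¹) (Ioi 0) := by
  intro s hs t ht h
  have h' := inv_injective h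
  rw [sq_eq_sq₀ (Real.cosh_pos _).le (Real.cosh_pos _).le] at h'
  rw [← Real.arcosh_cosh (le_of_lt hs), h', Real.arcosh_cosh (le_of_lt ht)]

lemma hasDerivAt_inv_cosh_sq (t : ℝ) : HasDerivAt (fun t : ℝ => (Real.cosh t ^ 2)⁻¹)
    (-(2 * Real.cosh t * Real.sinh t) / (Real.cosh t ^ 2) ^ 2) t := by
  have h := ((Real.hasDerivAt_cosh t).fun_pow 2).fun_inv (pow_pos (Real.cosh_pos t) 2).ne'
  simpa using h

lemma abs_deriv_smul_beta_integrand {u v t : ℝ} (ht : 0 < t) :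
    |-(2 * Real.cosh t * Real.sinh t) / (Real.cosh t ^ 2) ^ 2| •
      (((Real.cosh t ^ 2)⁻¹) ^ (u - 1) * (1 - (Real.cosh t ^ 2)⁻¹) ^ (v - 1)) =
    2 * (Real.sinh t ^ (2 * v - 1) * Real.cosh t ^ (1 - 2 * u - 2 * v)) := by
  have hs := Real.sinh_pos_iff.mpr ht
  have hc := Real.cosh_pos t
  have e : 1 - (Real.cosh t ^ 2)⁻¹ = Real.sinh t ^ (2 : ℝ) * Real.cosh t ^ (-2 : ℝ) := by
    rw [Real.rpow_neg hc.le, Real.rpow_two, Real.rpow_two, Real.sinh_sq]; field_simp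
  have e1 : (Real.cosh t ^ 2)⁻¹ = Real.cosh t ^ (-2 : ℝ) := by
    rw [Real.rpow_neg hc.le, Real.rpow_two]
  have e2 : |-(2 * Real.cosh t * Real.sinh t) / (Real.cosh t ^ 2) ^ 2| =
      2 * Real.sinh t ^ (1 : ℝ) * Real.cosh t ^ (-3 : ℝ) := by
    rw [neg_div, abs_neg, abs_of_pos (by positivity), Real.rpow_neg hc.le, Real.rpow_one]
    norm_cast
    field_simp
  rw [e, e1, e2, Real.mul_rpow (by positivity) (by positivity), ← Real.rpow_mul hc.le,
    ← Real.rpow_mul hc.le, ← Real.rpow_mul hs.le, smul_eq_mul,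
    show 2 * v - 1 = 1 + 2 * (v - 1) by ring,
    show 1 - 2 * u - 2 * v = -3 + -2 * (u - 1) + -2 * (v - 1) by ring,
    Real.rpow_add hs, Real.rpow_add hc, Real.rpow_add hc]
  ring

lemma beta_integrand_ofReal {u v x : ℝ} (hx : x ∈ Ioo (0 : ℝ) 1) :
    (x : ℂ) ^ ((u : ℂ) - 1) * (1 - (x : ℂ)) ^ ((v : ℂ) - 1) =
      ((x ^ (u - 1) * (1 - x) ^ (v - 1) : ℝ) : ℂ) := by
  rw [ofReal_mul, ofReal_cpow hx.1.le, ofReal_cpow (sub_nonneg.mpr hx.2.le)]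
  push_cast
  rfl

lemma integrableOn_beta_integrand {u v : ℝ} (hu : 0 < u) (hv : 0 < v) :
    IntegrableOn (fun x : ℝ => x ^ (u - 1) * (1 - x) ^ (v - 1)) (Ioo 0 1) := by
  have h := betaIntegral_convergent (u := u) (v := v) (by simpa) (by simpa)
  rw [intervalIntegrable_iff_integrableOn_Ioo_of_le zero_le_one] at h
  refine (IntegrableOn.congr_fun h (fun x hx => beta_integrand_ofReal hx)
    measurableSet_Ioo).re

lemma integral_beta_integrand {u v : ℝ} (hu : 0 < u) (hv : 0 < v) :
    ∫ x in Ioo (0 : ℝ) 1, x ^ (u - 1) * (1 - x) ^ (v - 1) =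
      Real.Gamma u * Real.Gamma v / Real.Gamma (u + v) := by
  have h := ProbabilityTheory.beta_eq_betaIntegralReal u v hu hv
  rw [ProbabilityTheory.beta] at h
  rw [h, betaIntegral, intervalIntegral.integral_of_le zero_le_one, integral_Ioc_eq_integral_Ioo,
    setIntegral_congr_fun measurableSet_Ioo (fun x hx => beta_integrand_ofReal hx)]
  exact (congrArg Complex.re integral_ofReal).symm

lemma integrableOn_sinh_rpow_mul_cosh_rpow {u v : ℝ} (hu : 0 < u) (hv : 0 < v) :
    IntegrableOn (fun t : ℝ => Real.sinh t ^ (2 * v - 1) * Real.cosh t ^ (1 - 2 * u - 2 * v))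
      (Ioi 0) := by
  have h := integrableOn_beta_integrand hu hv
  rw [← image_inv_cosh_sq, integrableOn_image_iff_integrableOn_abs_deriv_smul measurableSet_Ioi
    (fun t _ => (hasDerivAt_inv_cosh_sq t).hasDerivWithinAt) injOn_inv_cosh_sq] at h
  have h2 := (IntegrableOn.congr_fun h (fun t ht => abs_deriv_smul_beta_integrand ht)
    measurableSet_Ioi).const_mul (1 / 2)
  exact IntegrableOn.congr_fun h2 (fun t _ => by ring) measurableSet_Ioi

lemma integral_sinh_rpow_mul_cosh_rpow {u v : ℝ} (hu : 0 < u) (hv : 0 < v) :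
    ∫ t in Ioi (0 : ℝ), Real.sinh t ^ (2 * v - 1) * Real.cosh t ^ (1 - 2 * u - 2 * v) =
      1 / 2 * (Real.Gamma u * Real.Gamma v / Real.Gamma (u + v)) := by
  have h := integral_beta_integrand hu hv
  rw [← image_inv_cosh_sq, integral_image_eq_integral_abs_deriv_smul measurableSet_Ioi
    (fun t _ => (hasDerivAt_inv_cosh_sq t).hasDerivWithinAt) injOn_inv_cosh_sq,
    setIntegral_congr_fun measurableSet_Ioi (fun t ht => abs_deriv_smul_beta_integrand ht),
    integral_const_mul] at h
  linarith

/-- The `n`-th term of the Gauss hypergeometric series at real arguments. -/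
def hypTermReal (a b c x : ℝ) (n : ℕ) : ℝ :=
  (ascPochhammer ℝ n).eval a * (ascPochhammer ℝ n).eval b /
    ((ascPochhammer ℝ n).eval c * (n.factorial : ℝ)) * x ^ n

lemma hyp_ofReal (a b c x : ℝ) :
    hyp (a : ℂ) (b : ℂ) (c : ℂ) (x : ℂ) = ((∑' n, hypTermReal a b c x n : ℝ) : ℂ) := by
  rw [hyp, ofReal_tsum]
  congr 1
  ext n
  rw [hypTermReal, ascPochhammer_eval_ofReal, ascPochhammer_eval_ofReal,
    ascPochhammer_eval_ofReal]
  push_cast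
  rfl

lemma hypTermReal_pos {a b c x : ℝ} (ha : 0 < a) (hb : 0 < b) (hc : 0 < c) (hx : 0 < x) (n : ℕ) :
    0 < hypTermReal a b c x n := by
  have := ascPochhammer_pos n a ha
  have := ascPochhammer_pos n b hb
  have := ascPochhammer_pos n c hc
  rw [hypTermReal]
  positivity

lemma summable_hypTermReal {a b c x : ℝ} (ha : 0 < a) (hb : 0 < b) (hc : 0 < c) (hx : 0 < x)
    (hx1 : x < 1) : Summable (hypTermReal a b c x) := by
  refine summable_of_ratio_test_tendsto_lt_one hx1
    (.of_forall fun n => (hypTermReal_pos ha hb hc hx n).ne') ?_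
  have h1 := tendsto_add_mul_div_add_mul_atTop_nhds a c 1 (one_ne_zero (α := ℝ))
  have h2 := tendsto_add_mul_div_add_mul_atTop_nhds b 1 1 (one_ne_zero (α := ℝ))
  have h := (h1.mul h2).mul_const x
  simp only [div_one, one_mul] at h
  refine h.congr fun n => ?_
  rw [Real.norm_of_nonneg (hypTermReal_pos ha hb hc hx _).le,
    Real.norm_of_nonneg (hypTermReal_pos ha hb hc hx _).le, hypTermReal, hypTermReal]
  have := (ascPochhammer_pos n a ha).ne'
  have := (ascPochhammer_pos n b hb).ne'
  have := (ascPochhammer_pos n c hc).ne'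
  have : c + n ≠ 0 := by positivity
  rw [ascPochhammer_succ_eval, ascPochhammer_succ_eval, ascPochhammer_succ_eval,
    Nat.factorial_succ]
  have h2 : (n.factorial : ℝ) ≠ 0 := by positivity
  push_cast
  field_simp
  ring

/-- The real number `b_λ(t)` for `λ = iη`; see `bfun_I_mul`. -/
def bfunReal (m₁ m₂ : ℕ) (η t : ℝ) : ℝ :=
  2 ^ (-rho m₁ m₂ - 1 + η) *
    (Real.Gamma ((rho m₁ m₂ + η) / 2) * Real.Gamma (((m₁ : ℝ) + 2) / 4 + η / 2) /
      (Real.Gamma (((m₁ : ℝ) + m₂ + 1) / 2) * Real.Gamma (1 + η))) *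
    ((2 * Real.cosh t) ^ (-η - rho m₁ m₂) *
      ∑' n, hypTermReal ((rho m₁ m₂ + η) / 2) (((m₁ : ℝ) + 2) / 4 + η / 2) (1 + η)
        (Real.cosh t ^ 2)⁻¹ n)

lemma bfun_I_mul (m₁ m₂ : ℕ) (η t : ℝ) :
    bfun m₁ m₂ (Complex.I * η) t = (bfunReal m₁ m₂ η t : ℂ) := by
  have hI : Complex.I * (Complex.I * η) = -(η : ℂ) := by
    rw [← mul_assoc, I_mul_I, neg_one_mul]
  rw [bfun, Phi, hI,
    show ((rho m₁ m₂ : ℂ) - -(η : ℂ)) / 2 = (((rho m₁ m₂ + η) / 2 : ℝ) : ℂ) by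
      push_cast; ring,
    show ((m₁ : ℂ) + 2) / 4 - -(η : ℂ) / 2 = ((((m₁ : ℝ) + 2) / 4 + η / 2 : ℝ) : ℂ) by
      push_cast; ring,
    show (1 : ℂ) - -(η : ℂ) = ((1 + η : ℝ) : ℂ) by push_cast; ring,
    show ((m₁ : ℂ) + (m₂ : ℂ) + 1) / 2 = ((((m₁ : ℝ) + m₂ + 1) / 2 : ℝ) : ℂ) by
      push_cast; ring,
    show -(rho m₁ m₂ : ℂ) - 1 - -(η : ℂ) = ((-rho m₁ m₂ - 1 + η : ℝ) : ℂ) by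
      push_cast; ring,
    show -(η : ℂ) - (rho m₁ m₂ : ℂ) = ((-η - rho m₁ m₂ : ℝ) : ℂ) by push_cast; ring,
    ← ofReal_inv, hyp_ofReal, Gamma_ofReal, Gamma_ofReal, Gamma_ofReal, Gamma_ofReal,
    ← ofReal_cpow (mul_pos two_pos (Real.cosh_pos t)).le, ← ofReal_ofNat,
    ← ofReal_cpow (by norm_num), bfunReal]
  push_cast
  rfl

lemma rho_pos {m₁ : ℕ} (m₂ : ℕ) (hm₁ : 1 ≤ m₁) : 0 < rho m₁ m₂ := by
  have : (1 : ℝ) ≤ m₁ := by exact_mod_cast hm₁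
  rw [rho]
  positivity

lemma bfunReal_pos {m₁ : ℕ} (m₂ : ℕ) (hm₁ : 1 ≤ m₁) {η t : ℝ} (hη : 0 < η) (ht : 0 < t) :
    0 < bfunReal m₁ m₂ η t := by
  have hρ := rho_pos m₂ hm₁
  have ha : 0 < (rho m₁ m₂ + η) / 2 := by positivity
  have hb : 0 < ((m₁ : ℝ) + 2) / 4 + η / 2 := by positivity
  have hc : 0 < 1 + η := by positivity
  have hd : 0 < ((m₁ : ℝ) + m₂ + 1) / 2 := by positivity
  have := Real.Gamma_pos_of_pos ha
  have := Real.Gamma_pos_of_pos hb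
  have := Real.Gamma_pos_of_pos hc
  have := Real.Gamma_pos_of_pos hd
  have hx : (Real.cosh t ^ 2)⁻¹ ∈ Ioo (0 : ℝ) 1 := image_inv_cosh_sq ▸ mem_image_of_mem _ ht
  have h0 := hypTermReal_pos ha hb hc hx.1
  have := (summable_hypTermReal ha hb hc hx.1 hx.2).tsum_pos (fun n => (h0 n).le) 0 (h0 0)
  have := Real.cosh_pos t
  rw [bfunReal]
  positivity

/-- The `t`-dependence of the `n`-th term of the series for `bfunReal m₁ m₂ η t * Del m₁ m₂ t`. -/
lemma bfunReal_term_mul_Del (m₁ m₂ : ℕ) (η : ℝ) {t : ℝ} (ht : 0 < t) (n : ℕ) :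
    2 ^ (-rho m₁ m₂ - 1 + η) * ((2 * Real.cosh t) ^ (-η - rho m₁ m₂) *
      ((Real.cosh t ^ 2)⁻¹) ^ n) * Del m₁ m₂ t =
    1 / 2 * (Real.sinh t ^ (2 * (((m₁ : ℝ) + m₂ + 1) / 2) - 1) *
      Real.cosh t ^ (1 - 2 * ((η - rho m₁ m₂) / 2 + n) - 2 * (((m₁ : ℝ) + m₂ + 1) / 2))) := by
  have hs := Real.sinh_pos_iff.mpr ht
  have hc := Real.cosh_pos t
  have e1 : ((Real.cosh t ^ 2)⁻¹) ^ n = Real.cosh t ^ (-(2 * n : ℝ)) := by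
    rw [Real.rpow_neg hc.le, inv_pow, ← pow_mul]
    norm_cast
  have e2 : Real.sinh t ^ (2 * (((m₁ : ℝ) + m₂ + 1) / 2) - 1) = Real.sinh t ^ (m₁ + m₂) := by
    rw [← Real.rpow_natCast]
    push_cast
    ring_nf
  have e3 : Real.cosh t ^ (1 - 2 * ((η - rho m₁ m₂) / 2 + n) - 2 * (((m₁ : ℝ) + m₂ + 1) / 2)) =
      Real.cosh t ^ (-η - rho m₁ m₂) * Real.cosh t ^ (-(2 * n : ℝ)) * Real.cosh t ^ m₂ := by
    rw [← Real.rpow_natCast _ m₂, ← Real.rpow_add hc, ← Real.rpow_add hc, rho]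
    ring_nf
  have e4 : (2 : ℝ) ^ (-rho m₁ m₂ - 1 + η) * 2 ^ (-η - rho m₁ m₂) * 2 ^ (m₁ + m₂) * 2 ^ m₂ =
      1 / 2 := by
    rw [← Real.rpow_natCast _ (m₁ + m₂), ← Real.rpow_natCast _ m₂, ← Real.rpow_add two_pos,
      ← Real.rpow_add two_pos, ← Real.rpow_add two_pos,
      show -rho m₁ m₂ - 1 + η + (-η - rho m₁ m₂) + ((m₁ + m₂ : ℕ) : ℝ) + (m₂ : ℝ) = -1 by
        rw [rho]; push_cast; ring, Real.rpow_neg_one]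
    norm_num
  rw [e1, e2, e3, ← e4, Del, Real.mul_rpow zero_le_two hc.le, mul_pow, mul_pow]
  ring

lemma integral_bfunReal_mul_Del {m₁ : ℕ} (m₂ : ℕ) (hm₁ : 1 ≤ m₁) {η : ℝ}
    (hη : rho m₁ m₂ < η) :
    ∫ t in Ioi (0 : ℝ), bfunReal m₁ m₂ η t * Del m₁ m₂ t = 1 / (η ^ 2 - rho m₁ m₂ ^ 2) := by
  have hρ := rho_pos m₂ hm₁
  have hη0 : 0 < η := hρ.trans hη
  set r := rho m₁ m₂ with hr
  set a := (r + η) / 2 with ha_def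
  set b := ((m₁ : ℝ) + 2) / 4 + η / 2 with hb_def
  set v := ((m₁ : ℝ) + m₂ + 1) / 2 with hv_def
  set d := (η - r) / 2 with hd_def
  have ha : 0 < a := by positivity
  have hb : 0 < b := by positivity
  have hv : 0 < v := by positivity
  have hd : 0 < d := by rw [hd_def]; linarith
  have hc : 0 < 1 + η := by positivity
  have hadd : a + d = η := by rw [ha_def, hd_def]; ring
  have hdv : d + v = b := by rw [hd_def, hv_def, hb_def, hr, rho]; ring
  let K : ℕ → ℝ := fun n => Real.Gamma a * Real.Gamma b / (Real.Gamma v * Real.Gamma (1 + η)) *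
    ((ascPochhammer ℝ n).eval a * (ascPochhammer ℝ n).eval b /
      ((ascPochhammer ℝ n).eval (1 + η) * n.factorial)) * (1 / 2)
  let F : ℕ → ℝ → ℝ := fun n t => K n *
    (Real.sinh t ^ (2 * v - 1) * Real.cosh t ^ (1 - 2 * (d + n) - 2 * v))
  have hKpos : ∀ n, 0 < K n := fun n => by
    have := Real.Gamma_pos_of_pos ha
    have := Real.Gamma_pos_of_pos hb
    have := Real.Gamma_pos_of_pos hc
    have := Real.Gamma_pos_of_pos hv
    have := ascPochhammer_pos n a ha
    have := ascPochhammer_pos n b hb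
    have := ascPochhammer_pos n _ hc
    positivity
  have hF : ∀ t ∈ Ioi (0 : ℝ), ∑' n, F n t = bfunReal m₁ m₂ η t * Del m₁ m₂ t := by
    intro t ht
    rw [bfunReal, ← tsum_mul_left, ← tsum_mul_left, ← tsum_mul_right]
    congr 1
    ext n
    have h := bfunReal_term_mul_Del m₁ m₂ η ht n
    rw [← hr, ← hd_def, ← hv_def] at h
    simp only [F, K, hypTermReal]
    rw [mul_assoc _ (1 / 2), ← h]
    ring
  have hdn : ∀ n : ℕ, 0 < d + n := fun n => by positivity
  have hint : ∀ n, Integrable (F n) (volume.restrict (Ioi 0)) := fun n =>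
    (integrableOn_sinh_rpow_mul_cosh_rpow (hdn n) hv).const_mul (K n)
  have hval : ∀ n, ∫ t in Ioi (0 : ℝ), F n t = 1 / 4 *
      (Real.Gamma (a + n) * Real.Gamma (d + n) / (Real.Gamma (1 + (a + d) + n) * n.factorial)) := by
    intro n
    have g1 := (Real.Gamma_pos_of_pos hv).ne'
    have g2 := (Real.Gamma_pos_of_pos (by positivity : 0 < b + n)).ne'
    simp only [F]
    rw [integral_const_mul, integral_sinh_rpow_mul_cosh_rpow (hdn n) hv,
      show d + n + v = b + n by rw [← hdv]; ring, hadd, ← Gamma_mul_ascPochhammer ha,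
      ← Gamma_mul_ascPochhammer hc]
    rw [← Gamma_mul_ascPochhammer hb] at g2 ⊢
    have := left_ne_zero_of_mul g2
    have := right_ne_zero_of_mul g2
    simp only [K]
    field_simp
    norm_num
  have hnorm : ∀ n, ∫ t in Ioi (0 : ℝ), ‖F n t‖ = ∫ t in Ioi (0 : ℝ), F n t := fun n =>
    setIntegral_congr_fun measurableSet_Ioi fun t ht => by
      have hs := Real.sinh_pos_iff.mpr ht
      have hct := Real.cosh_pos t
      have := hKpos n
      exact Real.norm_of_nonneg (by positivity)
  have hsum := (hasSum_Gamma_ratio ha hd).mul_left (1 / 4)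
  have h := hasSum_integral_of_summable_integral_norm hint (by
    simp only [hnorm, hval]
    exact hsum.summable)
  simp only [hval] at h
  rw [← setIntegral_congr_fun measurableSet_Ioi hF, h.unique hsum, ha_def, hd_def]
  have h1 : η - r ≠ 0 := by linarith
  have h2 : r + η ≠ 0 := by positivity
  have h3 : η ^ 2 - r ^ 2 ≠ 0 := by
    rw [sq_sub_sq, add_comm]; exact mul_ne_zero h2 h1
  field_simp
  ring

theorem stmt7 (m₁ m₂ : ℕ) (hm₁ : 1 ≤ m₁) :
    (∀ η : ℝ, 0 < η → ∀ t : ℝ, 0 < t →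
      (bfun m₁ m₂ (Complex.I * η) t).im = 0 ∧ 0 < (bfun m₁ m₂ (Complex.I * η) t).re) ∧
    (∀ η : ℝ, rho m₁ m₂ < η →
      (∫ t in Set.Ioi (0 : ℝ), bfun m₁ m₂ (Complex.I * η) t * (Del m₁ m₂ t : ℂ)) =
        ((1 / (η ^ 2 - rho m₁ m₂ ^ 2) : ℝ) : ℂ)) ∧
    Filter.Tendsto
      (fun η : ℝ => ∫ t in Set.Ioi (0 : ℝ), ‖bfun m₁ m₂ (Complex.I * η) t‖ * Del m₁ m₂ t)
      Filter.atTop (nhds 0) := by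
  refine ⟨fun η hη t ht => ?_, fun η hη => ?_, ?_⟩
  · rw [bfun_I_mul]
    exact ⟨ofReal_im _, bfunReal_pos m₂ hm₁ hη ht⟩
  · rw [← integral_bfunReal_mul_Del m₂ hm₁ hη]
    simp only [bfun_I_mul, ← ofReal_mul]
    exact integral_ofReal
  · have h : Filter.Tendsto (fun η : ℝ => 1 / (η ^ 2 - rho m₁ m₂ ^ 2)) Filter.atTop (nhds 0) := by
      refine Filter.Tendsto.div_atTop tendsto_const_nhds ?_
      exact Filter.tendsto_atTop_add_const_right _ _ (Filter.tendsto_pow_atTop two_ne_zero)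
    refine h.congr' ?_
    filter_upwards [Filter.eventually_gt_atTop (rho m₁ m₂)] with η hη
    rw [← integral_bfunReal_mul_Del m₂ hm₁ hη]
    refine setIntegral_congr_fun measurableSet_Ioi fun t ht => ?_
    rw [bfun_I_mul, norm_real,
      Real.norm_of_nonneg (bfunReal_pos m₂ hm₁ ((rho_pos m₂ hm₁).trans hη) ht).le]

end
end

section
/- For every λ ∈ ℂ with 0 < Im λ < ρ and every measurable f : (0,∞) → ℂ with ∫₀^∞ |f(s)| Δ(s) ds < ∞, one has ∫₀^∞ |T_λf(t)| Δ(t) dt < ∞, i.e. T_λf is integrable with respect to the measure Δ(t) dt on (0,∞). -/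
open Complex MeasureTheory Set

noncomputable section

/-- The elementary spherical function φ_λ. -/
def sph (m₁ m₂ : ℕ) (l : ℂ) (t : ℝ) : ℂ :=
  ((Real.cosh t : ℝ) : ℂ) ^ (-((rho m₁ m₂ : ℂ) + Complex.I * l)) *
    hyp (((m₁ : ℂ) + 2) / 4 + Complex.I * l / 2) (((rho m₁ m₂ : ℂ) + Complex.I * l) / 2)
      (((m₁ : ℂ) + (m₂ : ℂ) + 1) / 2) (((Real.tanh t) ^ 2 : ℝ) : ℂ)

/-- The operator T_λ. -/
def Tfun (m₁ m₂ : ℕ) (l : ℂ) (f : ℝ → ℂ) (t : ℝ) : ℂ :=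
  bfun m₁ m₂ l t * (∫ s in Set.Ioi t, f s * sph m₁ m₂ l s * (Del m₁ m₂ s : ℂ)) -
    sph m₁ m₂ l t * (∫ s in Set.Ioi t, f s * bfun m₁ m₂ l s * (Del m₁ m₂ s : ℂ))

open Filter Topology

/-- The coefficients of the Gauss hypergeometric series. -/
def hypCoeff (a b c : ℂ) (n : ℕ) : ℂ :=
  (ascPochhammer ℂ n).eval a * (ascPochhammer ℂ n).eval b /
    ((ascPochhammer ℂ n).eval c * (n.factorial : ℂ))

lemma eventually_norm_add_natCast_le (z : ℂ) {ε : ℝ} (hε : 0 < ε) :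
    ∀ᶠ k : ℕ in atTop, ‖z + k‖ ≤ k + (z.re + ε) := by
  have h : Tendsto (fun k : ℕ => (k : ℝ)) atTop atTop := tendsto_natCast_atTop_atTop
  filter_upwards [h.eventually_ge_atTop (z.im ^ 2 / (2 * ε) + |z.re|)] with k hk
  have hpos : 0 ≤ z.im ^ 2 / (2 * ε) := by positivity
  have hre := neg_abs_le z.re
  have hy : z.im ^ 2 ≤ 2 * ε * (k + z.re) := by
    have : z.im ^ 2 / (2 * ε) ≤ k + z.re := by linarith
    rwa [div_le_iff₀' (by positivity)] at this
  refine abs_le_of_sq_le_sq' ?_ (by linarith) |>.2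
  rw [← Complex.normSq_eq_norm_sq, Complex.normSq_apply]
  simp only [add_re, natCast_re, add_im, natCast_im, add_zero]
  nlinarith [sq_nonneg ε]

lemma eventually_norm_mul_norm_le {a b c : ℂ} {σ : ℝ} (h : (a + b - c).re < σ) :
    ∀ᶠ k : ℕ in atTop, ‖a + k‖ * ‖b + k‖ ≤ (k + σ) * ‖c + k‖ := by
  simp only [sub_re, add_re] at h
  obtain ⟨δ, hδ, rfl⟩ : ∃ δ > 0, σ = a.re + b.re - c.re + 4 * δ :=
    ⟨(σ - (a.re + b.re - c.re)) / 4, by linarith, by ring⟩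
  set σ := a.re + b.re - c.re + 4 * δ with hσ
  have ht : Tendsto (fun k : ℕ => (k : ℝ)) atTop atTop := tendsto_natCast_atTop_atTop
  have ht' : Tendsto (fun k : ℕ => 2 * δ * (k : ℝ)) atTop atTop :=
    ht.const_mul_atTop (by positivity)
  filter_upwards [eventually_norm_add_natCast_le a hδ, eventually_norm_add_natCast_le b hδ,
    ht.eventually_ge_atTop (-σ),
    ht'.eventually_ge_atTop ((a.re + δ) * (b.re + δ) - σ * c.re)] with k ha hb h1 h2
  have hc : k + c.re ≤ ‖c + k‖ := by
    have := Complex.re_le_norm (c + k)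
    simp only [add_re, natCast_re] at this
    linarith
  calc ‖a + k‖ * ‖b + k‖ ≤ (k + (a.re + δ)) * (k + (b.re + δ)) :=
        mul_le_mul ha hb (norm_nonneg _) ((norm_nonneg _).trans ha)
    _ ≤ (k + σ) * (k + c.re) := by nlinarith
    _ ≤ (k + σ) * ‖c + k‖ := mul_le_mul_of_nonneg_left hc (by linarith)

lemma eventually_norm_hypCoeff_succ_le {a b c : ℂ} {σ : ℝ} (h : (a + b - c).re < σ) :
    ∀ᶠ k : ℕ in atTop,
      ‖hypCoeff a b c (k + 1)‖ * (k + 1) ≤ ‖hypCoeff a b c k‖ * (k + σ) := by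
  have ht : Tendsto (fun k : ℕ => (k : ℝ)) atTop atTop := tendsto_natCast_atTop_atTop
  filter_upwards [eventually_norm_mul_norm_le h, ht.eventually_gt_atTop (-c.re)] with k hk hc
  have hc0 : 0 < ‖c + k‖ := by
    have := Complex.re_le_norm (c + k)
    simp only [add_re, natCast_re] at this
    linarith
  have hk1 : ‖((k : ℂ) + 1)‖ = k + 1 := by
    rw [← Nat.cast_succ, Complex.norm_natCast]; simp
  have hsucc : hypCoeff a b c (k + 1) =
      hypCoeff a b c k * ((a + k) * (b + k) / ((c + k) * (k + 1))) := by
    simp only [hypCoeff, ascPochhammer_succ_eval, Nat.factorial_succ, Nat.cast_mul, Nat.cast_succ]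
    rw [div_mul_div_comm]
    congr 1 <;> ring
  have hle : ‖a + k‖ * ‖b + k‖ / ‖c + k‖ ≤ k + σ := by rwa [div_le_iff₀ hc0]
  calc ‖hypCoeff a b c (k + 1)‖ * (k + 1)
      = ‖hypCoeff a b c k‖ * (‖a + k‖ * ‖b + k‖ / ‖c + k‖) := by
        rw [hsucc, norm_mul, norm_div, norm_mul, norm_mul, hk1]
        have : (k : ℝ) + 1 ≠ 0 := by positivity
        field_simp
    _ ≤ _ := mul_le_mul_of_nonneg_left hle (norm_nonneg _)

/-- A form of Raabe's test. -/
lemma summable_of_eventually_succ_mul_le {u : ℕ → ℝ} (hu : ∀ k, 0 ≤ u k) {σ : ℝ} (hσ : σ < 0)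
    (h : ∀ᶠ k : ℕ in atTop, u (k + 1) * (k + 1) ≤ u k * (k + σ)) : Summable u := by
  obtain ⟨N, hN⟩ := eventually_atTop.1 h
  rw [← summable_nat_add_iff N]
  refine summable_of_sum_range_le (c := u N * N / (-σ)) (fun k => hu _) fun n => ?_
  rw [le_div_iff₀ (by linarith)]
  have key : (∑ i ∈ Finset.range n, u (i + N)) * (-σ) ≤ u N * N - u (n + N) * (n + N) := by
    induction n with
    | zero => simp
    | succ n ih =>
      have := hN (n + N) (by omega)
      rw [Finset.sum_range_succ, show n + 1 + N = n + N + 1 by ring]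
      push_cast at this ⊢
      nlinarith
  have := mul_nonneg (hu (n + N)) (by positivity : (0 : ℝ) ≤ n + N)
  linarith

lemma exists_le_mul_multichoose {u : ℕ → ℝ} (hu : ∀ k, 0 ≤ u k) {σ : ℝ} (hσ : 0 < σ)
    (h : ∀ᶠ k : ℕ in atTop, u (k + 1) * (k + 1) ≤ u k * (k + σ)) :
    ∃ C, 0 ≤ C ∧ ∀ k, u k ≤ C * Ring.choose (σ + k - 1) k := by
  set v : ℕ → ℝ := fun k => Ring.choose (σ + k - 1) k with hv
  have hv_eq : ∀ k, v k = (ascPochhammer ℝ k).eval σ / k.factorial := fun k => by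
    rw [eq_div_iff (by positivity), ← Polynomial.ascPochhammer_smeval_eq_eval,
      ← Ring.factorial_nsmul_multichoose_eq_ascPochhammer, nsmul_eq_mul, mul_comm, hv]
    simp only [Ring.choose]
    congr 2
    ring
  have hv_pos : ∀ k, 0 < v k := fun k => by
    rw [hv_eq]
    exact div_pos (ascPochhammer_pos k σ hσ) (by positivity)
  have hv_succ : ∀ k : ℕ, v (k + 1) * (k + 1) = v k * (k + σ) := fun k => by
    rw [hv_eq, hv_eq, ascPochhammer_succ_eval, Nat.factorial_succ]
    push_cast
    field_simp
    ring
  obtain ⟨N, hN⟩ := eventually_atTop.1 h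
  refine ⟨∑ i ∈ Finset.range (N + 1), u i / v i,
    Finset.sum_nonneg fun i _ => div_nonneg (hu i) (hv_pos i).le, fun k => ?_⟩
  have hsmall : ∀ k ≤ N, u k ≤ (∑ i ∈ Finset.range (N + 1), u i / v i) * v k := fun k hk => by
    rw [← div_le_iff₀ (hv_pos k)]
    exact Finset.single_le_sum (f := fun i => u i / v i)
      (fun i _ => div_nonneg (hu i) (hv_pos i).le) (by simp; omega)
  rcases le_total k N with hk | hk
  · exact hsmall k hk
  · change u k ≤ _ * v k
    induction k, hk using Nat.le_induction with
    | base => exact hsmall N le_rfl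
    | succ k hk ih =>
      have h1 := hN k hk
      have h2 := hv_succ k
      refine le_of_mul_le_mul_right ?_ (by positivity : (0 : ℝ) < k + 1)
      calc u (k + 1) * (k + 1) ≤ u k * (k + σ) := h1
        _ ≤ (_ * v k) * (k + σ) := mul_le_mul_of_nonneg_right ih (by positivity)
        _ = _ * v (k + 1) * (k + 1) := by rw [mul_assoc, ← h2, ← mul_assoc]

lemma hasSum_multichoose_mul_pow (σ : ℝ) {x : ℝ} (hx0 : 0 ≤ x) (hx1 : x < 1) :
    HasSum (fun k : ℕ => Ring.choose (σ + k - 1) k * x ^ k) ((1 - x) ^ σ)⁻¹ := by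
  have h := (Real.one_div_one_sub_rpow_hasFPowerSeriesOnBall_zero σ).hasSum (y := x) (by
    simp [Real.enorm_eq_ofReal hx0, hx1])
  simpa [FormalMultilinearSeries.ofScalars_apply_eq, mul_comm] using h

lemma summable_norm_hypCoeff {a b c : ℂ} (h : (a + b - c).re < 0) :
    Summable fun n => ‖hypCoeff a b c n‖ :=
  summable_of_eventually_succ_mul_le (fun _ => norm_nonneg _) (by linarith : (a + b - c).re / 2 < 0)
    (eventually_norm_hypCoeff_succ_le (by linarith))

/-- Below the critical exponent, the hypergeometric function is bounded on `[0, 1]`. -/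
lemma exists_norm_hyp_le {a b c : ℂ} (h : (a + b - c).re < 0) :
    ∃ C, 0 ≤ C ∧ ∀ x : ℝ, 0 ≤ x → x ≤ 1 → ‖hyp a b c x‖ ≤ C := by
  refine ⟨∑' n, ‖hypCoeff a b c n‖, tsum_nonneg fun _ => norm_nonneg _, fun x h0 h1 => ?_⟩
  refine tsum_of_norm_bounded (summable_norm_hypCoeff h).hasSum fun n => ?_
  change ‖hypCoeff a b c n * (x : ℂ) ^ n‖ ≤ _
  rw [norm_mul, norm_pow, Complex.norm_of_nonneg h0]
  exact mul_le_of_le_one_right (norm_nonneg _) (pow_le_one₀ h0 h1)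

/-- Above the critical exponent, the hypergeometric function is dominated on `[0, 1)` by a
negative power of `1 - x`. -/
lemma exists_norm_hyp_le_rpow {a b c : ℂ} {σ : ℝ} (hσ : 0 < σ) (h : (a + b - c).re < σ) :
    ∃ C, 0 ≤ C ∧ ∀ x : ℝ, 0 ≤ x → x < 1 → ‖hyp a b c x‖ ≤ C * ((1 - x) ^ σ)⁻¹ := by
  obtain ⟨C, hC, hle⟩ := exists_le_mul_multichoose (fun k => norm_nonneg (hypCoeff a b c k)) hσ
    (eventually_norm_hypCoeff_succ_le h)
  refine ⟨C, hC, fun x h0 h1 => ?_⟩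
  refine tsum_of_norm_bounded ((hasSum_multichoose_mul_pow σ h0 h1).mul_left C) fun n => ?_
  change ‖hypCoeff a b c n * (x : ℂ) ^ n‖ ≤ _
  rw [norm_mul, norm_pow, Complex.norm_of_nonneg h0, ← mul_assoc]
  exact mul_le_mul_of_nonneg_right (hle n) (pow_nonneg h0 n)

lemma summable_hypCoeff_mul_pow (a b c : ℂ) {x : ℝ} (h0 : 0 ≤ x) (h1 : x < 1) :
    Summable fun n => hypCoeff a b c n * (x : ℂ) ^ n := by
  obtain ⟨C, -, hle⟩ := exists_le_mul_multichoose (fun k => norm_nonneg (hypCoeff a b c k))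
    (by positivity : 0 < |(a + b - c).re| + 1)
    (eventually_norm_hypCoeff_succ_le ((le_abs_self _).trans_lt (lt_add_one _)))
  refine .of_norm_bounded
    ((hasSum_multichoose_mul_pow (|(a + b - c).re| + 1) h0 h1).summable.mul_left C) fun n => ?_
  rw [norm_mul, norm_pow, Complex.norm_of_nonneg h0, ← mul_assoc]
  exact mul_le_mul_of_nonneg_right (hle n) (pow_nonneg h0 n)

lemma aestronglyMeasurable_hyp_comp (a b c : ℂ) {g : ℝ → ℝ} (hg : Measurable g) {s : Set ℝ}
    (hs : MeasurableSet s) (h0 : ∀ t ∈ s, 0 ≤ g t) (h1 : ∀ t ∈ s, g t < 1) :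
    AEStronglyMeasurable (fun t => hyp a b c (g t)) (volume.restrict s) := by
  refine aestronglyMeasurable_of_tendsto_ae atTop
    (f := fun N t => ∑ n ∈ Finset.range N, hypCoeff a b c n * (g t : ℂ) ^ n)
    (fun N => by fun_prop) ?_
  filter_upwards [ae_restrict_mem hs] with t ht
  exact (summable_hypCoeff_mul_pow a b c (h0 t ht) (h1 t ht)).hasSum.tendsto_sum_nat

lemma integrableOn_mul_integral_Ioi {p g : ℝ → ℂ} {h : ℝ → ℝ}
    (hp : AEStronglyMeasurable p (volume.restrict (Ioi 0)))
    (hg : AEStronglyMeasurable g (volume.restrict (Ioi 0)))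
    (hpi : ∀ s > 0, IntegrableOn p (Ioo 0 s))
    (hle : ∀ s > 0, (∫ t in Ioo 0 s, ‖p t‖) * ‖g s‖ ≤ h s) (hh : IntegrableOn h (Ioi 0)) :
    IntegrableOn (fun t => p t * ∫ s in Ioi t, g s) (Ioi 0) := by
  set μ := (volume : Measure ℝ).restrict (Ioi 0) with hμ
  set F : ℝ × ℝ → ℂ := {z : ℝ × ℝ | z.1 < z.2}.indicator fun z => p z.1 * g z.2 with hF
  have hFm : AEStronglyMeasurable F (μ.prod μ) :=
    (hp.comp_fst.mul hg.comp_snd).indicator (measurableSet_lt measurable_fst measurable_snd)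
  have hFs : ∀ s, (fun t => F (t, s)) = (Iio s).indicator fun t => p t * g s := fun s => by
    ext t; simp [hF, indicator]
  have hFt : ∀ t, (fun s => F (t, s)) = (Ioi t).indicator fun s => p t * g s := fun t => by
    ext s; simp [hF, indicator]
  have hinter : ∀ s, Iio s ∩ Ioi (0 : ℝ) = Ioo 0 s := fun s => by
    ext; simp [and_comm]
  have hint : Integrable F (μ.prod μ) := by
    rw [integrable_prod_iff' hFm]
    constructor
    · filter_upwards [ae_restrict_mem measurableSet_Ioi] with s hs
      rw [hFs, integrable_indicator_iff measurableSet_Iio, IntegrableOn, hμ,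
        Measure.restrict_restrict measurableSet_Iio, hinter]
      exact (hpi s hs).mul_const _
    · refine hh.mono' hFm.norm.prod_swap.integral_prod_right' ?_
      filter_upwards [ae_restrict_mem measurableSet_Ioi] with s hs
      rw [Real.norm_of_nonneg (integral_nonneg fun _ => norm_nonneg _)]
      refine le_trans (le_of_eq ?_) (hle s hs)
      have : (fun t => ‖F (t, s)‖) = (Iio s).indicator fun t => ‖p t‖ * ‖g s‖ := by
        ext t
        rw [congrFun (hFs s) t, norm_indicator_eq_indicator_norm]
        simp only [norm_mul]
      rw [this, integral_indicator measurableSet_Iio, hμ,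
        Measure.restrict_restrict measurableSet_Iio, hinter, integral_mul_const]
  refine hint.integral_prod_left.congr ?_
  filter_upwards [ae_restrict_mem measurableSet_Ioi] with t ht
  rw [hFt, integral_indicator measurableSet_Ioi, hμ, Measure.restrict_restrict measurableSet_Ioi,
    Ioi_inter_Ioi, max_eq_left (le_of_lt ht), integral_const_mul]

lemma tanh_nonneg {t : ℝ} (ht : 0 ≤ t) : 0 ≤ Real.tanh t := by
  rw [Real.tanh_eq_sinh_div_cosh]
  exact div_nonneg (Real.sinh_nonneg_iff.2 ht) (Real.cosh_pos t).le

lemma tanh_pos {t : ℝ} (ht : 0 < t) : 0 < Real.tanh t := by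
  rw [Real.tanh_eq_sinh_div_cosh]
  exact div_pos (Real.sinh_pos_iff.2 ht) (Real.cosh_pos t)

lemma one_sub_inv_cosh_sq (t : ℝ) : 1 - (Real.cosh t ^ 2)⁻¹ = Real.tanh t ^ 2 := by
  have := Real.cosh_sq t
  have h0 := (Real.cosh_pos t).ne'
  rw [Real.tanh_eq_sinh_div_cosh]
  field_simp
  linarith

lemma tanh_sq_lt_one (t : ℝ) : Real.tanh t ^ 2 < 1 := by
  rw [← one_sub_inv_cosh_sq]
  have := Real.cosh_pos t
  have : 0 < (Real.cosh t ^ 2)⁻¹ := by positivity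
  linarith

lemma tanh_le_tanh {s t : ℝ} (hs : 0 ≤ s) (h : s ≤ t) : Real.tanh s ≤ Real.tanh t := by
  refine le_of_sq_le_sq ?_ (tanh_nonneg (hs.trans h))
  rw [← one_sub_inv_cosh_sq, ← one_sub_inv_cosh_sq]
  have := Real.cosh_le_cosh.2 (abs_le_abs_of_nonneg hs h)
  gcongr

lemma cosh_rpow_le_exp {t α : ℝ} (ht : 0 ≤ t) (hα : 0 < α) :
    Real.cosh t ^ α ≤ Real.exp (α * t) := by
  have h : Real.cosh t ≤ Real.exp t := by
    rw [Real.cosh_eq]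
    have : Real.exp (-t) ≤ Real.exp t := Real.exp_le_exp.2 (by linarith)
    linarith
  calc Real.cosh t ^ α ≤ Real.exp t ^ α :=
        Real.rpow_le_rpow (Real.cosh_pos t).le h hα.le
    _ = Real.exp (α * t) := by rw [← Real.exp_mul, mul_comm]

lemma exp_le_two_rpow_mul_cosh_rpow (t : ℝ) {α : ℝ} (hα : 0 < α) :
    Real.exp (α * t) ≤ 2 ^ α * Real.cosh t ^ α := by
  rw [← Real.mul_rpow two_pos.le (Real.cosh_pos t).le, mul_comm, Real.exp_mul]
  refine Real.rpow_le_rpow (Real.exp_pos t).le ?_ hα.le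
  rw [Real.cosh_eq]
  linarith [Real.exp_pos (-t)]

/-- A weight on the half-line whose integral over `(0, s)` is controlled by its value at `s`. -/
def weight (j : ℕ) (α t : ℝ) : ℝ := Real.tanh t ^ j * Real.cosh t ^ α

lemma weight_pos (j : ℕ) (α : ℝ) {t : ℝ} (ht : 0 < t) : 0 < weight j α t :=
  mul_pos (pow_pos (tanh_pos ht) j) (Real.rpow_pos_of_pos (Real.cosh_pos t) α)

lemma weight_le {j : ℕ} {α : ℝ} (hα : 0 < α) {s t : ℝ} (ht : 0 ≤ t) (hts : t ≤ s) :
    weight j α t ≤ Real.tanh s ^ j * Real.exp (α * t) :=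
  mul_le_mul (pow_le_pow_left₀ (tanh_nonneg ht) (tanh_le_tanh ht hts) j) (cosh_rpow_le_exp ht hα)
    (Real.rpow_nonneg (Real.cosh_pos t).le α) (pow_nonneg (tanh_nonneg (ht.trans hts)) j)

lemma integrableOn_exp_mul_Ioo (α s : ℝ) : IntegrableOn (fun t => Real.exp (α * t)) (Ioo 0 s) :=
  (Continuous.integrableOn_Icc (by fun_prop)).mono_set Ioo_subset_Icc_self

lemma integral_exp_mul_Ioo_le {α s : ℝ} (hα : 0 < α) (hs : 0 ≤ s) :
    ∫ t in Ioo 0 s, Real.exp (α * t) ≤ Real.exp (α * s) / α := by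
  rw [← integral_Ioc_eq_integral_Ioo, ← intervalIntegral.integral_of_le hs,
    intervalIntegral.integral_comp_mul_left (fun x => Real.exp x) hα.ne', integral_exp]
  simp only [mul_zero, Real.exp_zero, smul_eq_mul]
  rw [div_eq_inv_mul]
  gcongr
  linarith

lemma integrableOn_Ioo_of_norm_le_weight {p : ℝ → ℂ} {C α : ℝ} {j : ℕ} (hα : 0 < α) (hC : 0 ≤ C)
    (hp : AEStronglyMeasurable p (volume.restrict (Ioi 0)))
    (hle : ∀ t > 0, ‖p t‖ ≤ C * weight j α t) (s : ℝ) :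
    IntegrableOn p (Ioo 0 s) := by
  refine ((integrableOn_exp_mul_Ioo α s).const_mul (C * Real.tanh s ^ j)).mono'
    (hp.mono_measure (Measure.restrict_mono Ioo_subset_Ioi_self le_rfl)) ?_
  filter_upwards [ae_restrict_mem measurableSet_Ioo] with t ht
  rw [mul_assoc]
  exact (hle t ht.1).trans (mul_le_mul_of_nonneg_left (weight_le hα ht.1.le ht.2.le) hC)

lemma integral_Ioo_norm_le_of_norm_le_weight {p : ℝ → ℂ} {C α : ℝ} {j : ℕ} (hα : 0 < α)
    (hC : 0 ≤ C) (hp : AEStronglyMeasurable p (volume.restrict (Ioi 0)))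
    (hle : ∀ t > 0, ‖p t‖ ≤ C * weight j α t) {s : ℝ} (hs : 0 < s) :
    ∫ t in Ioo 0 s, ‖p t‖ ≤ C * 2 ^ α / α * weight j α s := by
  have hT := pow_nonneg (tanh_nonneg hs.le) j
  calc ∫ t in Ioo 0 s, ‖p t‖
      ≤ ∫ t in Ioo 0 s, C * Real.tanh s ^ j * Real.exp (α * t) := by
        refine setIntegral_mono_on (integrableOn_Ioo_of_norm_le_weight hα hC hp hle s).norm
          ((integrableOn_exp_mul_Ioo α s).const_mul _) measurableSet_Ioo fun t ht => ?_
        rw [mul_assoc]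
        exact (hle t ht.1).trans (mul_le_mul_of_nonneg_left (weight_le hα ht.1.le ht.2.le) hC)
    _ = C * Real.tanh s ^ j * ∫ t in Ioo 0 s, Real.exp (α * t) := integral_const_mul _ _
    _ ≤ C * Real.tanh s ^ j * ((2 ^ α * Real.cosh s ^ α) / α) := by
        refine mul_le_mul_of_nonneg_left ?_ (by positivity)
        refine (integral_exp_mul_Ioo_le hα hs.le).trans ?_
        gcongr
        exact exp_le_two_rpow_mul_cosh_rpow s hα
    _ = C * 2 ^ α / α * weight j α s := by rw [weight]; ring

lemma integrableOn_mul_integral_Ioi_of_weight {p q f : ℝ → ℂ} {D : ℝ → ℝ} {C C' α : ℝ} {j : ℕ}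
    (hα : 0 < α) (hC : 0 ≤ C)
    (hp : AEStronglyMeasurable p (volume.restrict (Ioi 0)))
    (hq : AEStronglyMeasurable q (volume.restrict (Ioi 0)))
    (hf : Measurable f) (hD : Measurable D) (hD0 : ∀ t > 0, 0 ≤ D t)
    (hpw : ∀ t > 0, ‖p t‖ ≤ C * weight j α t) (hqw : ∀ t > 0, ‖q t‖ ≤ C' * (weight j α t)⁻¹)
    (hfD : IntegrableOn (fun s => ‖f s‖ * D s) (Ioi 0)) :
    IntegrableOn (fun t => p t * ∫ s in Ioi t, f s * q s * (D s : ℂ)) (Ioi 0) := by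
  refine integrableOn_mul_integral_Ioi (h := fun s => C * 2 ^ α / α * C' * (‖f s‖ * D s)) hp
    ((hf.aestronglyMeasurable.mul hq).mul
      (Complex.measurable_ofReal.comp hD).aestronglyMeasurable)
    (fun s _ => integrableOn_Ioo_of_norm_le_weight hα hC hp hpw s) (fun s hs => ?_)
    (hfD.const_mul _)
  have hw := weight_pos j α hs
  have hK : 0 ≤ C * 2 ^ α / α := by positivity
  have hfD0 : 0 ≤ ‖f s‖ * D s := mul_nonneg (norm_nonneg _) (hD0 s hs)
  calc (∫ t in Ioo 0 s, ‖p t‖) * ‖f s * q s * (D s : ℂ)‖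
      ≤ C * 2 ^ α / α * weight j α s * (C' * (weight j α s)⁻¹ * (‖f s‖ * D s)) := by
        refine mul_le_mul (integral_Ioo_norm_le_of_norm_le_weight hα hC hp hpw hs) ?_
          (norm_nonneg _) (by positivity)
        rw [norm_mul, norm_mul, Complex.norm_of_nonneg (hD0 s hs), mul_comm ‖f s‖, mul_assoc]
        exact mul_le_mul_of_nonneg_right (hqw s hs) hfD0
    _ = C * 2 ^ α / α * C' * (‖f s‖ * D s) * (weight j α s * (weight j α s)⁻¹) := by ring
    _ = C * 2 ^ α / α * C' * (‖f s‖ * D s) := by rw [mul_inv_cancel₀ hw.ne', mul_one]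

lemma measurable_Del (m₁ m₂ : ℕ) : Measurable (Del m₁ m₂) := by
  unfold Del
  fun_prop

lemma Del_nonneg (m₁ m₂ : ℕ) {t : ℝ} (ht : 0 ≤ t) : 0 ≤ Del m₁ m₂ t :=
  mul_nonneg (pow_nonneg (mul_nonneg two_pos.le (Real.sinh_nonneg_iff.2 ht)) _)
    (pow_nonneg (mul_nonneg two_pos.le (Real.cosh_pos t).le) _)

lemma Del_eq_weight (m₁ m₂ : ℕ) (t : ℝ) :
    Del m₁ m₂ t = 2 ^ (m₁ + 2 * m₂) * weight (m₁ + m₂) (2 * rho m₁ m₂) t := by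
  have h : Real.cosh t ^ (2 * rho m₁ m₂) = Real.cosh t ^ (m₁ + 2 * m₂) := by
    rw [← Real.rpow_natCast]
    congr 1
    rw [rho]
    push_cast
    ring
  have h0 := (Real.cosh_pos t).ne'
  rw [weight, h, Del, Real.tanh_eq_sinh_div_cosh, div_pow, mul_pow, mul_pow,
    show m₁ + 2 * m₂ = m₁ + m₂ + m₂ by ring, pow_add 2 (m₁ + m₂), pow_add _ (m₁ + m₂)]
  field_simp

lemma exists_norm_sph_le (m₁ m₂ : ℕ) {l : ℂ} (hl : 0 < l.im) :
    ∃ C, 0 ≤ C ∧ ∀ t, ‖sph m₁ m₂ l t‖ ≤ C * Real.cosh t ^ (-(rho m₁ m₂ - l.im)) := by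
  obtain ⟨C, hC, hle⟩ := exists_norm_hyp_le (a := ((m₁ : ℂ) + 2) / 4 + Complex.I * l / 2)
    (b := ((rho m₁ m₂ : ℂ) + Complex.I * l) / 2) (c := ((m₁ : ℂ) + (m₂ : ℂ) + 1) / 2) (by
      have : ((m₁ : ℂ) + 2) / 4 + Complex.I * l / 2 + ((rho m₁ m₂ : ℂ) + Complex.I * l) / 2
          - ((m₁ : ℂ) + (m₂ : ℂ) + 1) / 2 = Complex.I * l := by
        rw [rho]; push_cast; ring
      rw [this]
      simpa using hl)
  refine ⟨C, hC, fun t => ?_⟩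
  rw [sph, norm_mul, Complex.norm_cpow_eq_rpow_re_of_pos (Real.cosh_pos t), mul_comm]
  have hre : (-((rho m₁ m₂ : ℂ) + Complex.I * l)).re = -(rho m₁ m₂ - l.im) := by simp; ring
  rw [hre]
  refine mul_le_mul_of_nonneg_right (hle _ (sq_nonneg _) (le_of_lt ?_))
    (Real.rpow_nonneg (Real.cosh_pos t).le _)
  exact tanh_sq_lt_one t

lemma inv_cosh_sq_lt_one {t : ℝ} (ht : 0 < t) : (Real.cosh t ^ 2)⁻¹ < 1 := by
  have := pow_pos (tanh_pos ht) 2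
  rw [← one_sub_inv_cosh_sq] at this
  linarith

lemma exists_norm_Phi_le (m₁ m₂ : ℕ) (hm₁ : 1 ≤ m₁) (l : ℂ) :
    ∃ C, 0 ≤ C ∧ ∀ t > 0,
      ‖Phi m₁ m₂ l t‖ ≤ C * (weight (m₁ + m₂) (rho m₁ m₂ + l.im) t)⁻¹ := by
  obtain ⟨C, hC, hle⟩ := exists_norm_hyp_le_rpow (a := ((rho m₁ m₂ : ℂ) - Complex.I * l) / 2)
    (b := ((m₁ : ℂ) + 2) / 4 - Complex.I * l / 2) (c := 1 - Complex.I * l)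
    (σ := ((m₁ + m₂ : ℕ) : ℝ) / 2) (by positivity) (by
      have : ((rho m₁ m₂ : ℂ) - Complex.I * l) / 2 + (((m₁ : ℂ) + 2) / 4 - Complex.I * l / 2)
          - (1 - Complex.I * l) = (((m₁ + m₂ - 1) / 2 : ℝ) : ℂ) := by
        rw [rho]; push_cast; ring
      rw [this, Complex.ofReal_re]
      push_cast
      linarith)
  refine ⟨2 ^ (-(rho m₁ m₂ + l.im)) * C, by positivity, fun t ht => ?_⟩
  have hK := Real.cosh_pos t
  have hT := tanh_pos ht
  have hre : (Complex.I * l - (rho m₁ m₂ : ℂ)).re = -(rho m₁ m₂ + l.im) := by simp; ring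
  have hpow : (Real.tanh t ^ 2) ^ (((m₁ + m₂ : ℕ) : ℝ) / 2) = Real.tanh t ^ (m₁ + m₂) := by
    rw [← Real.rpow_natCast, ← Real.rpow_mul hT.le, ← Real.rpow_natCast]
    congr 1
    push_cast
    ring
  have h := hle (Real.cosh t ^ 2)⁻¹ (by positivity) (inv_cosh_sq_lt_one ht)
  rw [one_sub_inv_cosh_sq, hpow, Complex.ofReal_inv] at h
  rw [Phi, norm_mul, Complex.norm_cpow_eq_rpow_re_of_pos (by positivity), hre,
    Real.mul_rpow two_pos.le hK.le]
  calc _ ≤ 2 ^ (-(rho m₁ m₂ + l.im)) * Real.cosh t ^ (-(rho m₁ m₂ + l.im)) *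
        (C * (Real.tanh t ^ (m₁ + m₂))⁻¹) := mul_le_mul_of_nonneg_left h (by positivity)
    _ = _ := by
        rw [weight, mul_inv, Real.rpow_neg hK.le (rho m₁ m₂ + l.im)]
        ring

lemma exists_norm_bfun_le (m₁ m₂ : ℕ) (hm₁ : 1 ≤ m₁) (l : ℂ) :
    ∃ C, 0 ≤ C ∧ ∀ t > 0,
      ‖bfun m₁ m₂ l t‖ ≤ C * (weight (m₁ + m₂) (rho m₁ m₂ + l.im) t)⁻¹ := by
  obtain ⟨C, hC, hle⟩ := exists_norm_Phi_le m₁ m₂ hm₁ l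
  refine ⟨‖(2 : ℂ) ^ (-(rho m₁ m₂ : ℂ) - 1 - Complex.I * l) *
    (Complex.Gamma (((rho m₁ m₂ : ℂ) - Complex.I * l) / 2) *
      Complex.Gamma (((m₁ : ℂ) + 2) / 4 - Complex.I * l / 2) /
      (Complex.Gamma (((m₁ : ℂ) + (m₂ : ℂ) + 1) / 2) * Complex.Gamma (1 - Complex.I * l)))‖ * C,
    mul_nonneg (norm_nonneg _) hC, fun t ht => ?_⟩
  rw [bfun, norm_mul, mul_assoc]
  exact mul_le_mul_of_nonneg_left (hle t ht) (norm_nonneg _)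

lemma aestronglyMeasurable_sph (m₁ m₂ : ℕ) (l : ℂ) :
    AEStronglyMeasurable (sph m₁ m₂ l) (volume.restrict (Ioi 0)) := by
  have htanh : Measurable Real.tanh := by
    rw [show Real.tanh = fun t => Real.sinh t / Real.cosh t from
      funext Real.tanh_eq_sinh_div_cosh]
    fun_prop
  refine AEStronglyMeasurable.mul (Measurable.aestronglyMeasurable (by fun_prop)) ?_
  exact aestronglyMeasurable_hyp_comp _ _ _ (htanh.pow_const 2) measurableSet_Ioi
    (fun t _ => sq_nonneg _) (fun t _ => tanh_sq_lt_one t)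

lemma aestronglyMeasurable_bfun (m₁ m₂ : ℕ) (l : ℂ) :
    AEStronglyMeasurable (bfun m₁ m₂ l) (volume.restrict (Ioi 0)) := by
  refine AEStronglyMeasurable.const_mul (AEStronglyMeasurable.mul
    (Measurable.aestronglyMeasurable (by fun_prop)) ?_) _
  simp only [← Complex.ofReal_inv]
  exact aestronglyMeasurable_hyp_comp _ _ _ (g := fun t => (Real.cosh t ^ 2)⁻¹) (by fun_prop)
    measurableSet_Ioi (fun t _ => by positivity) (fun t ht => inv_cosh_sq_lt_one ht)

theorem stmt9 (m₁ m₂ : ℕ) (hm₁ : 1 ≤ m₁) (l : ℂ) (hl₀ : 0 < l.im) (hl₁ : l.im < rho m₁ m₂)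
    (f : ℝ → ℂ) (hf : Measurable f)
    (hf₁ : IntegrableOn (fun s : ℝ => ‖f s‖ * Del m₁ m₂ s) (Set.Ioi 0)) :
    IntegrableOn (fun t : ℝ => Tfun m₁ m₂ l f t * (Del m₁ m₂ t : ℂ)) (Set.Ioi 0) := by
  obtain ⟨A, hA, hsph⟩ := exists_norm_sph_le m₁ m₂ hl₀
  obtain ⟨B, hB, hb⟩ := exists_norm_bfun_le m₁ m₂ hm₁ l
  have hDm : AEStronglyMeasurable (fun t => (Del m₁ m₂ t : ℂ)) (volume.restrict (Ioi 0)) :=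
    (Complex.measurable_ofReal.comp (measurable_Del m₁ m₂)).aestronglyMeasurable
  have hsphm := aestronglyMeasurable_sph m₁ m₂ l
  have hbm := aestronglyMeasurable_bfun m₁ m₂ l
  have hD0 : ∀ t > 0, 0 ≤ Del m₁ m₂ t := fun t ht => Del_nonneg m₁ m₂ (le_of_lt ht)
  have h₁ := integrableOn_mul_integral_Ioi_of_weight (α := rho m₁ m₂ - l.im) (j := 0)
    (C := B * 2 ^ (m₁ + 2 * m₂)) (C' := A) (sub_pos.2 hl₁) (by positivity) (hbm.mul hDm) hsphm
    hf (measurable_Del m₁ m₂) hD0 (fun t ht => ?_) (fun t ht => ?_) hf₁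
  · have h₂ := integrableOn_mul_integral_Ioi_of_weight (α := rho m₁ m₂ + l.im) (j := m₁ + m₂)
      (C := A * 2 ^ (m₁ + 2 * m₂)) (C' := B) (by linarith) (by positivity) (hsphm.mul hDm) hbm
      hf (measurable_Del m₁ m₂) hD0 (fun t ht => ?_) hb hf₁
    · refine (h₁.sub h₂).congr (ae_of_all _ fun t => ?_)
      simp only [Tfun, Pi.sub_apply, Pi.mul_apply]
      ring
    · rw [Pi.mul_apply, norm_mul, Complex.norm_of_nonneg (hD0 t ht)]
      refine (mul_le_mul_of_nonneg_right (hsph t) (hD0 t ht)).trans_eq ?_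
      rw [Del_eq_weight, weight, weight,
        show rho m₁ m₂ + l.im = -(rho m₁ m₂ - l.im) + 2 * rho m₁ m₂ by ring,
        Real.rpow_add (Real.cosh_pos t)]
      ring
  · rw [Pi.mul_apply, norm_mul, Complex.norm_of_nonneg (hD0 t ht)]
    refine (mul_le_mul_of_nonneg_right (hb t ht) (hD0 t ht)).trans_eq ?_
    have hT := tanh_pos ht
    have hK := Real.cosh_pos t
    rw [Del_eq_weight, weight, weight, weight,
      show 2 * rho m₁ m₂ = (rho m₁ m₂ + l.im) + (rho m₁ m₂ - l.im) by ring,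
      Real.rpow_add hK (rho m₁ m₂ + l.im), pow_zero, one_mul]
    have hKα := Real.rpow_pos_of_pos hK (rho m₁ m₂ + l.im)
    generalize Real.cosh t ^ (rho m₁ m₂ + l.im) = x at hKα ⊢
    field_simp
  · refine (hsph t).trans_eq ?_
    rw [weight, pow_zero, one_mul, Real.rpow_neg (Real.cosh_pos t).le]

end
end
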